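/- arXiv:0712.3847 — 2 statements merged into one kernel-verified Lean document; each statement's English description precedes it below -/
import Mathlib

section
/- Let 1 ≤ q ≤ p be integers and let t ≥ 0 be real. Then ∫_{(0,∞)^{p×q}} 1{L(m) ≤ t} ∏_{i,j} e^{−m_{ij}} dm_{ij} = (∫_{(0,t)^q} Δ_q(x)² ∏_{i=1}^q x_i^{p−q} e^{−x_i} dx₁…dx_q) / (∫_{(0,∞)^q} Δ_q(x)² ∏_{i=1}^q x_i^{p−q} e^{−x_i} dx₁…dx_q). Equivalently, for a p×q random matrix M with independent entries each exponentially distributed with P(M_{ij} ≤ s) = 1 − e^{−s}, the probability that L(M) ≤ t equals the displayed ratio of Laguerre-type Selberg integrals. -/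
/-!
The entries of the matrix are revealed one at a time, row by row. The information needed about the
past is a sorted profile `z : Fin q → ℝ`: in column `l`, the last-passage value that any later cell
of that column can build on. Processing the cell in column `k` with weight `w` sets
`v = z k + w` and replaces `z l` by `max (z l) v` for `l ≥ k` (`LPP.upd`). The event `L ≤ t` says
that the final profile is at most `t` (`LPP.run_below_iff`).

Let `V t r z` be the probability that the final profile is at most `t`, when `r` cells remain and
the profile is `z`. It is a determinant, whose `(l, j)` entry is the derivative of order
`q - 1 - l + j` of `Φ_n` at `t - z l`, where `n` is the number of cells remaining in column `l`,
`Φ_0 u = u ^ (q - 1) / (q - 1)!`, and `Φ_n' + Φ_n = Φ_{n-1}` with `Φ_n 0 = 0`. The reason is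
that this determinant satisfies the backward equation: when the variable `v` enters several rows
through the maximum, those rows are successive derivatives of each other, so differentiating any of
them except row `k` produces two proportional rows, and differentiating row `k` lowers `n` there by
one (`LPP.hasDerivAt_V`). As the determinant vanishes when the top entry of the profile is `t`, the
equation integrates to the one-cell averaging identity `LPP.V_step`, and induction on `r` gives
`LPP.J_eq_V`.

At the zero profile and `r = p * q`, Taylor's formula with integral remainder turns the entry
`(l, j)` into the integral over `(0, t)` of `(t - y) ^ l / l!` times a derivative of the Gamma
density, that is, times a polynomial of degree less than `q` and the weight
`y ^ (p - q) * exp (-y)`. Andréief's identity (`LPP.andreief`) then gives a constant times the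
integral of `Δ_q(x)² ∏ xᵢ ^ (p - q) exp (-xᵢ)` over `(0, t) ^ q` (`LPP.V_eq_lag`). The constant is
independent of `t`, and `t → ∞` identifies it as the inverse of the full integral
(`LPP.const_mul_norm`).
-/

open scoped BigOperators
open MeasureTheory

/-- A right/down lattice path of cells from `(0,0)` to `(p-1,q-1)`. -/
def IsLatticePath (p q : ℕ) (path : List (ℕ × ℕ)) : Prop :=
  path.head? = some (0, 0) ∧ path.getLast? = some (p - 1, q - 1) ∧
  List.Chain' (fun a b => b = (a.1 + 1, a.2) ∨ b = (a.1, a.2 + 1)) path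

/-- Sum of the entries of `W` along a path of cells. -/
def pathSum {α : Type*} [AddCommMonoid α] (W : ℕ → ℕ → α) (path : List (ℕ × ℕ)) : α :=
  (path.map fun c => W c.1 c.2).sum

/-- `L(W)`: maximal sum of real entries of `W` over right/down paths from `(1,1)` to `(p,q)`. -/
noncomputable def Lreal (p q : ℕ) (W : ℕ → ℕ → ℝ) : ℝ :=
  sSup {s : ℝ | ∃ path, IsLatticePath p q path ∧ s = pathSum W path}

/-- Vandermonde product `Δ_n(x) = ∏_{i<j} (x_i − x_j)`. -/
def Vdm (n : ℕ) (x : Fin n → ℝ) : ℝ :=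
  ∏ p ∈ Finset.univ.filter (fun p : Fin n × Fin n => p.1 < p.2), (x p.1 - x p.2)

namespace LPP

/-! ### Iterated exponential convolutions and their derivatives -/

/-- `Phi q 0 u = u ^ (q - 1) / (q - 1)!`, and `Phi q (n + 1)` is the convolution of `Phi q n` with the
exponential density: the solution of `f' + f = Phi q n` with `f 0 = 0`. -/
noncomputable def Phi (q : ℕ) : ℕ → ℝ → ℝ
  | 0 => fun u => u ^ (q - 1) / ((q - 1).factorial : ℝ)
  | n + 1 => fun u => Real.exp (-u) * ∫ s in (0 : ℝ)..u, Real.exp s * Phi q n s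

/-- The `m`-th derivative of `Phi q n`. These are the entries of the determinant `V`; there `n` is the
number of cells still to be processed in a column. -/
noncomputable def D (q n m : ℕ) : ℝ → ℝ := iteratedDeriv m (Phi q n)

lemma hasDerivAt_primitive {f : ℝ → ℝ} (hf : Continuous f) (u : ℝ) :
    HasDerivAt (fun u => ∫ s in (0 : ℝ)..u, f s) (f u) u :=
  intervalIntegral.integral_hasDerivAt_right (hf.intervalIntegrable _ _)
    (hf.stronglyMeasurableAtFilter _ _) hf.continuousAt

lemma contDiff_Phi (q n : ℕ) : ContDiff ℝ ((⊤ : ℕ∞) : WithTop ℕ∞) (Phi q n) := by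
  induction n with
  | zero => simp only [Phi]; fun_prop
  | succ n ih =>
    simp only [Phi]
    refine ContDiff.mul (by fun_prop) ?_
    have hg : ContDiff ℝ ((⊤ : ℕ∞) : WithTop ℕ∞) (fun s => Real.exp s * Phi q n s) :=
      Real.contDiff_exp.mul ih
    rw [contDiff_infty_iff_deriv]
    refine ⟨fun u => (hasDerivAt_primitive hg.continuous u).differentiableAt, ?_⟩
    rwa [funext fun u => (hasDerivAt_primitive hg.continuous u).deriv]

lemma hasDerivAt_D (q n m : ℕ) (u : ℝ) : HasDerivAt (D q n m) (D q n (m + 1) u) u := by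
  have h := ((contDiff_Phi q n).differentiable_iteratedDeriv m
    (by exact_mod_cast WithTop.coe_lt_top m)).differentiableAt (x := u)
  unfold D
  rw [iteratedDeriv_succ]
  exact h.hasDerivAt

lemma continuous_D (q n m : ℕ) : Continuous (D q n m) :=
  continuous_iff_continuousAt.2 fun u => (hasDerivAt_D q n m u).continuousAt

lemma deriv_D (q n m : ℕ) : deriv (D q n m) = D q n (m + 1) :=
  funext fun u => (hasDerivAt_D q n m u).deriv

/-- Differentiating `Phi' + Phi = Phi_prev`: the relation that makes `V` solve the backward
recursion. -/
lemma D_ode (q n m : ℕ) : ∀ u, D q (n + 1) (m + 1) u + D q (n + 1) m u = D q n m u := by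
  induction m with
  | zero =>
    intro u
    have hc : Continuous (fun s => Real.exp s * Phi q n s) :=
      Real.continuous_exp.mul (contDiff_Phi q n).continuous
    have h1 := (hasDerivAt_neg u).exp.mul (hasDerivAt_primitive hc u)
    have h2 : HasDerivAt (Phi q (n + 1)) _ u := h1
    have h3 : D q (n + 1) 0 = Phi q (n + 1) := by simp [D]
    have h4 := hasDerivAt_D q (n + 1) 0 u
    rw [h3] at h4
    rw [h4.unique h2]
    simp only [D, iteratedDeriv_zero, Phi]
    have : Real.exp (-u) * Real.exp u = 1 := by rw [← Real.exp_add]; simp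
    linear_combination (Phi q n u) * this
  | succ m ih =>
    intro u
    have h1 := (hasDerivAt_D q (n + 1) (m + 1) u).add (hasDerivAt_D q (n + 1) m u)
    have h2 := hasDerivAt_D q n m u
    rw [← funext ih] at h2
    exact h1.unique h2

lemma D_zero (q m : ℕ) (u : ℝ) :
    D q 0 m u = ((q - 1).descFactorial m : ℝ) * u ^ (q - 1 - m) / ((q - 1).factorial : ℝ) := by
  simp only [D, Phi, div_eq_inv_mul]
  rw [iteratedDeriv_const_mul_field, iteratedDeriv_pow]

lemma D_zero_top (q : ℕ) (u : ℝ) : D q 0 (q - 1) u = 1 := by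
  rw [D_zero, Nat.descFactorial_self]
  simp [Nat.factorial_ne_zero]

lemma D_zero_of_le {q m : ℕ} (h : q - 1 < m) (u : ℝ) : D q 0 m u = 0 := by
  rw [D_zero, Nat.descFactorial_of_lt h]; simp

/-- `Phi q n` vanishes at `0` to order `n + q - 1`, since each of the `n` convolutions raises the
order by one. -/
lemma D_at_zero (q n m : ℕ) (h : m + 1 < n + q) : D q n m 0 = 0 := by
  induction n generalizing m with
  | zero => rw [D_zero, zero_pow (by omega)]; simp
  | succ n ih =>
    induction m with
    | zero => simp [D, Phi]
    | succ m ihm =>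
      have := D_ode q n m 0
      rw [ihm (by omega), ih m (by omega)] at this
      simpa using this

/-- The `q`-th derivative kills the polynomial seed, so that what is left is the
`(n + 1)`-fold convolution of the exponential density with itself, a Gamma density. -/
lemma D_gamma (q n : ℕ) (hq : 1 ≤ q) (u : ℝ) :
    D q (n + 1) q u = u ^ n / (n.factorial : ℝ) * Real.exp (-u) := by
  induction n generalizing u with
  | zero =>
    have hd : ∀ u, HasDerivAt (fun u => Real.exp u * D q 1 q u) 0 u := fun u => by
      have h := (Real.hasDerivAt_exp u).mul (hasDerivAt_D q 1 q u)
      refine h.congr_deriv ?_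
      have := D_ode q 0 q u
      rw [D_zero_of_le (by omega)] at this
      linear_combination Real.exp u * this
    have hc := is_const_of_deriv_eq_zero (fun u => (hd u).differentiableAt)
      (fun u => (hd u).deriv) u 0
    -- `D_at_zero` does not reach the order `q`; the value there comes from the equation itself.
    have h0 : D q 1 q 0 = 1 := by
      have := D_ode q 0 (q - 1) 0
      rw [D_zero_top, D_at_zero q 1 (q - 1) (by omega), Nat.sub_add_cancel hq] at this
      simpa using this
    simp only [h0, Real.exp_zero, mul_one] at hc
    rw [Real.exp_neg]
    simp
    field_simp
    linarith
  | succ n ih =>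
    have hd : ∀ u, HasDerivAt (fun u => Real.exp u * D q (n + 2) q u
        - u ^ (n + 1) / ((n + 1).factorial : ℝ)) 0 u := fun u => by
      have h := ((Real.hasDerivAt_exp u).mul (hasDerivAt_D q (n + 2) q u)).sub
        ((hasDerivAt_pow (n + 1) u).div_const ((n + 1).factorial : ℝ))
      refine h.congr_deriv ?_
      have := D_ode q (n + 1) q u
      rw [ih] at this
      have he : Real.exp u * Real.exp (-u) = 1 := by rw [← Real.exp_add]; simp
      have h5 : ((n + 1 : ℕ) : ℝ) * u ^ (n + 1 - 1) / ((n + 1).factorial : ℝ)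
          = u ^ n / (n.factorial : ℝ) := by
        rw [Nat.factorial_succ]
        have := Nat.factorial_ne_zero n
        push_cast
        field_simp
      rw [h5]
      linear_combination Real.exp u * this + u ^ n / (n.factorial : ℝ) * he
    have hc := is_const_of_deriv_eq_zero (fun u => (hd u).differentiableAt)
      (fun u => (hd u).deriv) u 0
    have h0 : D q (n + 2) q 0 = 0 := D_at_zero _ _ _ (by omega)
    simp only [h0, mul_zero] at hc
    have he : Real.exp u * Real.exp (-u) = 1 := by rw [← Real.exp_add]; simp
    have hc' : Real.exp u * D q (n + 2) q u = u ^ (n + 1) / ((n + 1).factorial : ℝ) := by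
      simp at hc
      linarith
    linear_combination Real.exp (-u) * hc' - D q (n + 2) q u * he

/-- Further derivatives of the Gamma density keep the shape polynomial times `u ^ (n - j)` times
`exp (-u)`; the polynomials are Laguerre polynomials up to scaling, but only their degree matters. -/
lemma D_gamma_deriv (q n : ℕ) (hq : 1 ≤ q) (j : ℕ) (hj : j ≤ n) :
    ∃ P : Polynomial ℝ, P.natDegree ≤ j ∧
      ∀ u, D q (n + 1) (q + j) u = u ^ (n - j) * P.eval u * Real.exp (-u) := by
  induction j with
  | zero =>
    refine ⟨Polynomial.C (1 / (n.factorial : ℝ)), by simp, fun u => ?_⟩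
    rw [add_zero, D_gamma q n hq]
    simp; ring
  | succ j ih =>
    obtain ⟨P, hP, h⟩ := ih (by omega)
    refine ⟨Polynomial.C ((n - j : ℕ) : ℝ) * P + Polynomial.X * P.derivative - Polynomial.X * P,
      ?_, fun u => ?_⟩
    · refine (Polynomial.natDegree_sub_le _ _).trans (max_le ?_ ?_)
      · refine (Polynomial.natDegree_add_le _ _).trans (max_le ?_ ?_)
        · exact (Polynomial.natDegree_C_mul_le _ _).trans (by omega)
        · refine Polynomial.natDegree_mul_le.trans ?_
          have := Polynomial.natDegree_derivative_le P
          have := Polynomial.natDegree_X_le (R := ℝ)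
          omega
      · refine Polynomial.natDegree_mul_le.trans ?_
        have := Polynomial.natDegree_X_le (R := ℝ)
        omega
    · have h1 := hasDerivAt_D q (n + 1) (q + j) u
      rw [funext h] at h1
      have h2 := (((hasDerivAt_pow (n - j) u).mul (P.hasDerivAt u)).mul (hasDerivAt_neg u).exp)
      have h3 := h1.unique h2
      rw [← add_assoc, h3]
      obtain ⟨k, hk⟩ : ∃ k, n - j = k + 1 := ⟨n - j - 1, by omega⟩
      have hk' : n - (j + 1) = k := by omega
      rw [hk, hk']
      simp
      ring

/-! ### The determinantal value function -/

/-- The derivative of a determinant is the sum over rows of the determinants with that row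
differentiated. -/
lemma hasDerivAt_det {ι : Type*} [Fintype ι] [DecidableEq ι] {M : ℝ → Matrix ι ι ℝ}
    {M' : Matrix ι ι ℝ} {v : ℝ} (h : ∀ i j, HasDerivAt (fun v => M v i j) (M' i j) v) :
    HasDerivAt (fun v => (M v).det) (∑ i, ((M v).updateRow i (M' i)).det) v := by
  have h1 : HasDerivAt (fun v => (M v).det)
      (∑ σ : Equiv.Perm ι, ((Equiv.Perm.sign σ : ℤ) : ℝ) *
        ∑ i, (∏ j ∈ Finset.univ.erase i, M v j (σ j)) • M' i (σ i)) v := by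
    have h2 : (fun v => (M v).det) = fun v => ∑ σ : Equiv.Perm ι,
        ((Equiv.Perm.sign σ : ℤ) : ℝ) * ∏ i, M v i (σ i) := by
      funext v
      rw [← Matrix.det_transpose, Matrix.det_apply']
      rfl
    rw [h2]
    refine HasDerivAt.fun_sum fun σ _ => HasDerivAt.const_mul _ ?_
    exact HasDerivAt.fun_finsetProd fun i _ => h i (σ i)
  refine h1.congr_deriv ?_
  simp_rw [Finset.mul_sum]
  rw [Finset.sum_comm]
  refine Finset.sum_congr rfl fun i _ => ?_
  rw [← Matrix.det_transpose, Matrix.det_apply']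
  refine Finset.sum_congr rfl fun σ _ => ?_
  congr 1
  rw [← Finset.prod_erase_mul _ _ (Finset.mem_univ i)]
  simp only [Matrix.transpose_apply, Matrix.updateRow_self, smul_eq_mul]
  congr 1
  refine Finset.prod_congr rfl fun j hj => ?_
  rw [Matrix.updateRow_ne (Finset.ne_of_mem_erase hj)]

/-- The new profile when the cell in column `k` receives the last-passage value `v`: the columns to
the left of `k` are unaffected, and the others are now bounded below by `v`. -/
noncomputable def upd {q : ℕ} (k : Fin q) (z : Fin q → ℝ) (v : ℝ) : Fin q → ℝ :=
  fun l => if l < k then z l else max (z l) v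

/-- The determinant giving the probability that the last-passage value stays at most `t`, when `r`
cells remain to be processed and the current profile is `z`, sorted and bounded by `t`. The number `(r + l) / q` is the number of cells
remaining in column `l` when the matrix is read row by row. -/
noncomputable def V (q : ℕ) (t : ℝ) (r : ℕ) (z : Fin q → ℝ) : ℝ :=
  (Matrix.of fun l j : Fin q => D q ((r + l) / q) (q - 1 - l + j) (t - z l)).det

/-- The column of the cell processed when `r + 1` cells remain; the matrix is read row by row, from
left to right, and ends at column `q - 1`. -/
def cell {q : ℕ} (hq : 0 < q) (r : ℕ) : Fin q := ⟨q - 1 - r % q, by omega⟩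

lemma V_zero (q : ℕ) (t : ℝ) (z : Fin q → ℝ) : V q t 0 z = 1 := by
  have h0 : ∀ l : Fin q, (0 + (l : ℕ)) / q = 0 := fun l => by
    rw [zero_add]; exact Nat.div_eq_of_lt l.2
  unfold V
  rw [Matrix.det_of_isLowerTriangular]
  · refine Finset.prod_eq_one fun l _ => ?_
    have : q - 1 - (l : ℕ) + l = q - 1 := by omega
    rw [Matrix.of_apply, h0, this, D_zero_top]
  · intro l j hlj
    have : (l : ℕ) < j := hlj
    rw [Matrix.of_apply, h0, D_zero_of_le (by omega)]

lemma upd_self {q : ℕ} (k : Fin q) (z : Fin q → ℝ) (hz : Monotone z) : upd k z (z k) = z := by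
  funext l
  unfold upd
  split_ifs with h
  · rfl
  · exact max_eq_left (hz (not_lt.1 h))

lemma upd_mono {q : ℕ} (k : Fin q) (z : Fin q → ℝ) (hz : Monotone z) (v : ℝ) :
    Monotone (upd k z v) := by
  intro a b hab
  unfold upd
  split_ifs with h1 h2 h2
  · exact hz hab
  · exact (hz hab).trans (le_max_left _ _)
  · exact absurd (lt_of_le_of_lt hab h2) h1
  · exact max_le_max (hz hab) le_rfl

lemma continuous_upd {q : ℕ} (k : Fin q) (z : Fin q → ℝ) : Continuous (upd k z) := by
  refine continuous_pi fun l => ?_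
  unfold upd
  split_ifs
  · exact continuous_const
  · exact continuous_const.max continuous_id

lemma continuous_V (q : ℕ) (t : ℝ) (r : ℕ) : Continuous (V q t r) := by
  unfold V
  refine Continuous.matrix_det ?_
  refine continuous_pi fun l => continuous_pi fun j => ?_
  exact (continuous_D q ((r + l) / q) (q - 1 - l + j)).comp
    (continuous_const.sub (continuous_apply l))

/-- This lemma and the next three say how many cells `(r + l) / q` remain in column `l` before and
after the cell in column `k` is processed: exactly the column `k` loses one. -/
lemma level_lt {q r l k : ℕ} (hk : k = q - 1 - r % q) (hlk : l < k) :
    (r + 1 + l) / q = r / q ∧ (r + l) / q = r / q := by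
  have h := Nat.div_add_mod r q
  have h2 : 0 < q := by omega
  have := Nat.mod_lt r h2
  have e1 : (r / q) * q = q * (r / q) := by ring
  rw [Nat.div_eq_iff h2, Nat.div_eq_iff h2, e1]
  omega

lemma level_ge {q r l k : ℕ} (hk : k = q - 1 - r % q) (hlk : k ≤ l) (hl : l < q) :
    (r + 1 + l) / q = r / q + 1 := by
  have h2 : 0 < q := by omega
  have h := Nat.div_add_mod r q
  have := Nat.mod_lt r h2
  rw [Nat.div_eq_iff h2]
  have e1 : (r / q + 1) * q = q * (r / q) + q := by ring
  rw [e1]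
  omega

lemma level_gt {q r l k : ℕ} (hk : k = q - 1 - r % q) (hlk : k < l) (hl : l < q) :
    (r + l) / q = r / q + 1 := by
  have := level_ge (l := l - 1) hk (by omega) (by omega)
  rwa [show r + 1 + (l - 1) = r + l by omega] at this

lemma level_eq {q r k : ℕ} (hq : 0 < q) (hk : k = q - 1 - r % q) :
    (r + k) / q = r / q := by
  have h := Nat.div_add_mod r q
  have := Nat.mod_lt r hq
  rw [Nat.div_eq_iff hq]
  have e1 : (r / q) * q = q * (r / q) := by ring
  rw [e1]
  omega

/-- The differential equation satisfied by `V` along the update of column `k`. Only the rows `l ≥ k`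
with `z l < v` depend on `v`. Differentiating such a row `l > k` gives minus the row `l - 1`,
hence a zero determinant; differentiating the row `k` lowers the level of that column, by `D_ode`.
The points `v = z l` are excluded because `max (z l) v` has a corner there. -/
lemma hasDerivAt_V {q : ℕ} (hq : 0 < q) (t : ℝ) (r : ℕ) (z : Fin q → ℝ) (hz : Monotone z)
    (v : ℝ) (hv : z (cell hq r) < v) (hne : ∀ l, v ≠ z l) :
    HasDerivAt (fun v => V q t (r + 1) (upd (cell hq r) z v))
      (V q t (r + 1) (upd (cell hq r) z v) - V q t r (upd (cell hq r) z v)) v := by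
  set k := cell hq r with hk
  have hkv : (k : ℕ) = q - 1 - r % q := rfl
  set a := r / q with ha
  let M : ℝ → Matrix (Fin q) (Fin q) ℝ := fun v => Matrix.of fun l j : Fin q =>
    D q ((r + 1 + l) / q) (q - 1 - l + j) (t - upd k z v l)
  let M' : Matrix (Fin q) (Fin q) ℝ := Matrix.of fun l j : Fin q =>
    if l < k then 0 else if v < z l then 0 else - D q (a + 1) (q - 1 - l + j + 1) (t - v)
  have hM : ∀ i j, HasDerivAt (fun v => M v i j) (M' i j) v := by
    intro l j
    simp only [M, M', Matrix.of_apply, upd]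
    split_ifs with h1 h2
    · exact hasDerivAt_const _ _
    · refine (hasDerivAt_const v (D q ((r + 1 + l) / q) (q - 1 - l + j) (t - z l))).congr_of_eventuallyEq ?_
      filter_upwards [gt_mem_nhds h2] with x hx
      rw [max_eq_left hx.le]
    · have h3 : z l < v := lt_of_le_of_ne (not_lt.1 h2) (hne l).symm
      rw [level_ge hkv (not_lt.1 h1) l.2]
      have h4 := (hasDerivAt_D q (a + 1) (q - 1 - l + j) (t - v)).comp v ((hasDerivAt_id v).const_sub t)
      have h5 : HasDerivAt (fun x => D q (a + 1) (q - 1 - l + j) (t - x))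
        (- D q (a + 1) (q - 1 - l + j + 1) (t - v)) v := h4.congr_deriv (by simp)
      refine h5.congr_of_eventuallyEq ?_
      filter_upwards [lt_mem_nhds h3] with x hx
      rw [max_eq_right hx.le]
  refine (hasDerivAt_det hM).congr_deriv ?_
  have hupdv : ∀ l, ¬ l < k → ¬ v < z l → upd k z v l = v := by
    intro l h1 h2
    simp only [upd, if_neg h1]
    exact max_eq_right (not_lt.1 h2)
  -- Of the row-wise derivatives only the one in row `k` survives.
  rw [Finset.sum_eq_single k]
  · have e1 : M' k = (M v) k - fun j : Fin q => D q a (q - 1 - k + j) (t - v) := by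
      funext j
      have := D_ode q a (q - 1 - k + j) (t - v)
      simp only [M', M, Matrix.of_apply, Pi.sub_apply, lt_irrefl, if_false, if_neg (not_lt.2 hv.le)]
      rw [hupdv k (lt_irrefl _) (not_lt.2 hv.le), level_ge hkv le_rfl k.2]
      linarith
    have e2 : (M v).updateRow k (fun j : Fin q => D q a (q - 1 - k + j) (t - v)) =
        Matrix.of fun l j : Fin q => D q ((r + l) / q) (q - 1 - l + j) (t - upd k z v l) := by
      ext l j
      rcases lt_trichotomy l k with h | h | h
      · rw [Matrix.updateRow_ne h.ne]
        simp only [M, Matrix.of_apply]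
        rw [(level_lt hkv h).1, (level_lt hkv h).2]
      · rw [h, Matrix.updateRow_self, Matrix.of_apply, hupdv k (lt_irrefl _) (not_lt.2 hv.le),
          level_eq hq hkv]
      · rw [Matrix.updateRow_ne h.ne']
        simp only [M, Matrix.of_apply]
        rw [level_ge hkv (le_of_lt h) l.2, level_gt hkv h l.2]
    rw [e1, sub_eq_add_neg, Matrix.det_updateRow_add, Matrix.updateRow_eq_self,
      ← neg_one_smul ℝ, Matrix.det_updateRow_smul, e2]
    simp only [V, M]
    ring
  · intro l _ hl
    by_cases h0 : l < k ∨ v < z l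
    · refine Matrix.det_eq_zero_of_row_eq_zero l fun j => ?_
      rw [Matrix.updateRow_self]
      simp only [M', Matrix.of_apply]
      rcases h0 with h0 | h0 <;> simp [h0]
    · push Not at h0
      have hkl : k < l := lt_of_le_of_ne h0.1 hl.symm
      have hkl' : (k : ℕ) < l := hkl
      let l' : Fin q := ⟨l - 1, by omega⟩
      have hl'k : ¬ l' < k := by
        intro h; have : (l : ℕ) - 1 < k := h; omega
      have hl'l : l' ≤ l := by
        show (l : ℕ) - 1 ≤ l
        omega
      have hne' : l' ≠ l := by
        intro h; have := congrArg Fin.val h; simp only [l'] at this; omega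
      have e1 : M' l = (-1 : ℝ) • (M v) l' := by
        funext j
        simp only [M', M, Matrix.of_apply, Pi.smul_apply, if_neg (not_lt.2 h0.1),
          if_neg (not_lt.2 h0.2)]
        rw [hupdv l' hl'k (not_lt.2 ((hz hl'l).trans h0.2)), level_ge hkv (not_lt.1 hl'k) l'.2]
        have : q - 1 - (l' : ℕ) + j = q - 1 - l + j + 1 := by simp only [l']; omega
        rw [this]; simp [a]
      rw [e1, Matrix.det_updateRow_smul, Matrix.det_zero_of_row_eq hne', mul_zero]
      rw [Matrix.updateRow_self, Matrix.updateRow_ne hne']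
  · intro h; exact absurd (Finset.mem_univ _) h

/-- Boundary value: when the last entry of the profile equals `t`, the last row of the determinant
is zero. -/
lemma V_top {q : ℕ} (hq : 0 < q) (t : ℝ) (r : ℕ) (z : Fin q → ℝ) (hzt : ∀ l, z l ≤ t) :
    V q t (r + 1) (upd (cell hq r) z t) = 0 := by
  have hkv : ((cell hq r : Fin q) : ℕ) = q - 1 - r % q := rfl
  let l : Fin q := ⟨q - 1, by omega⟩
  have hkl : ((cell hq r : Fin q) : ℕ) ≤ (l : ℕ) := by simp only [l]; omega
  refine Matrix.det_eq_zero_of_row_eq_zero l fun j => ?_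
  rw [Matrix.of_apply, level_ge hkv hkl l.2]
  have : upd (cell hq r) z t l = t := by
    unfold upd
    rw [if_neg (not_lt.2 (Fin.le_def.2 hkl)), max_eq_right (hzt l)]
  rw [this, sub_self]
  apply D_at_zero
  have : q - 1 - (l : ℕ) = 0 := Nat.sub_self _
  have := j.2
  generalize r / q = a
  omega

/-- One step of the backward recursion: the value with `r + 1` cells remaining is the exponential
average of the value with `r` cells remaining. It is the integrated form of `hasDerivAt_V`, with the
boundary value `V_top`. -/
lemma V_step {q : ℕ} (hq : 0 < q) (t : ℝ) (r : ℕ) (z : Fin q → ℝ) (hz : Monotone z)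
    (hzt : ∀ l, z l ≤ t) :
    V q t (r + 1) z = ∫ w in (0 : ℝ)..(t - z (cell hq r)),
      Real.exp (-w) * V q t r (upd (cell hq r) z (z (cell hq r) + w)) := by
  set k := cell hq r with hk
  let G : ℝ → ℝ := fun w => - (Real.exp (-w) * V q t (r + 1) (upd k z (z k + w)))
  have hcont : ∀ r, Continuous fun w => Real.exp (-w) * V q t r (upd k z (z k + w)) := fun r =>
    (Real.continuous_exp.comp continuous_neg).mul ((continuous_V q t r).comp
      ((continuous_upd k z).comp (continuous_const.add continuous_id)))
  have h := MeasureTheory.integral_eq_of_hasDerivAt_off_countable G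
    (fun w => Real.exp (-w) * V q t r (upd k z (z k + w))) (a := 0) (b := t - z k)
    (s := Set.range fun l => z l - z k) (Set.countable_range _)
    ((hcont (r + 1)).neg.continuousOn) ?_ ((hcont r).intervalIntegrable _ _)
  · rw [h]
    simp only [G]
    rw [add_sub_cancel, V_top hq t r z hzt, add_zero, upd_self k z hz]
    simp
  · rintro w ⟨hw, hws⟩
    have hw0 : 0 < w := by
      have := hw.1
      rwa [min_eq_left (sub_nonneg.2 (hzt k))] at this
    have h1 := hasDerivAt_V hq t r z hz (z k + w) (by linarith) (fun l hl => hws ⟨l, by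
      show z l - z k = w
      linarith⟩)
    have h2 : HasDerivAt (fun w => V q t (r + 1) (upd k z (z k + w))) _ w :=
      (h1.comp w ((hasDerivAt_id w).const_add (z k)))
    have h3 := ((hasDerivAt_neg w).exp.mul h2).neg
    refine h3.congr_deriv ?_
    simp only [hk]
    simp
    ring

/-! ### The iterated integral -/

/-- The profile reached from `z` by processing the remaining `r` cells, with weights
`w (r - 1), …, w 0` in this order. As the profile is already a running maximum, the new value in
column `k` is `z k` plus the weight of the cell. -/
noncomputable def run {q : ℕ} (hq : 0 < q) (w : ℕ → ℝ) : ℕ → (Fin q → ℝ) → (Fin q → ℝ)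
  | 0, z => z
  | r + 1, z => run hq w r (upd (cell hq r) z (z (cell hq r) + w r))

/-- The standard exponential density. -/
noncomputable def rho : ℝ → ENNReal :=
  (Set.Ioi (0 : ℝ)).indicator fun x => ENNReal.ofReal (Real.exp (-x))

/-- The indicator function of the profiles bounded by `t`. -/
noncomputable def below {q : ℕ} (t : ℝ) : (Fin q → ℝ) → ENNReal :=
  {z : Fin q → ℝ | ∀ l, z l ≤ t}.indicator 1

/-- The probability that the profile reached from `z` after `r` cells is at most `t`, as an iterated
integral with one variable per cell. -/
noncomputable def J {q : ℕ} (hq : 0 < q) (t : ℝ) : ℕ → (Fin q → ℝ) → ENNReal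
  | 0, z => below t z
  | r + 1, z => ∫⁻ w, rho w * J hq t r (upd (cell hq r) z (z (cell hq r) + w))

lemma measurable_rho : Measurable rho :=
  Measurable.indicator (by fun_prop) measurableSet_Ioi

lemma J_of_exists_gt {q : ℕ} (hq : 0 < q) (t : ℝ) (r : ℕ) (z : Fin q → ℝ) (l : Fin q)
    (hl : t < z l) : J hq t r z = 0 := by
  induction r generalizing z with
  | zero =>
    refine Set.indicator_of_notMem ?_ _
    intro h
    exact absurd (h l) (not_le.2 hl)
  | succ r ih =>
    simp only [J]
    rw [lintegral_eq_zero_iff']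
    · refine Filter.Eventually.of_forall fun w => ?_
      simp only [Pi.zero_apply]
      rw [ih, mul_zero]
      unfold upd
      split_ifs
      · exact hl
      · exact lt_max_of_lt_left hl
    · have : ∀ w, rho w * J hq t r (upd (cell hq r) z (z (cell hq r) + w)) = 0 := fun w => by
        rw [ih, mul_zero]
        unfold upd
        split_ifs
        · exact hl
        · exact lt_max_of_lt_left hl
      simp_rw [this]
      exact aemeasurable_const

/-- The determinant computes the iterated integral. Nonnegativity of `V` is carried along because the
Bochner integral of `V_step` has to be turned into a lower Lebesgue integral. -/
lemma J_eq_V {q : ℕ} (hq : 0 < q) (t : ℝ) (r : ℕ) (z : Fin q → ℝ) (hz : Monotone z)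
    (hzt : ∀ l, z l ≤ t) : 0 ≤ V q t r z ∧ J hq t r z = ENNReal.ofReal (V q t r z) := by
  induction r generalizing z with
  | zero =>
    rw [V_zero]
    refine ⟨zero_le_one, ?_⟩
    have : z ∈ {z : Fin q → ℝ | ∀ l, z l ≤ t} := hzt
    simp [J, below, Set.indicator_of_mem this]
  | succ r ih =>
    set k := cell hq r with hk
    have hkt : 0 ≤ t - z k := sub_nonneg.2 (hzt k)
    have hmem : ∀ w ∈ Set.Ioc 0 (t - z k), ∀ l, upd k z (z k + w) l ≤ t := by
      intro w hw l
      have := hw.2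
      unfold upd
      split_ifs
      · exact hzt l
      · exact max_le (hzt l) (by linarith)
    have hnn : ∀ w ∈ Set.Ioc 0 (t - z k),
        0 ≤ Real.exp (-w) * V q t r (upd k z (z k + w)) := fun w hw =>
      mul_nonneg (Real.exp_pos _).le (ih _ (upd_mono k z hz _) (hmem w hw)).1
    have hcont : Continuous fun w => Real.exp (-w) * V q t r (upd k z (z k + w)) :=
      (Real.continuous_exp.comp continuous_neg).mul ((continuous_V q t r).comp
        ((continuous_upd k z).comp (continuous_const.add continuous_id)))
    have hV := V_step hq t r z hz hzt
    rw [← hk, intervalIntegral.integral_of_le hkt] at hV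
    refine ⟨?_, ?_⟩
    · rw [hV]
      exact setIntegral_nonneg measurableSet_Ioc hnn
    · rw [hV, ofReal_integral_eq_lintegral_ofReal
        ((hcont.intervalIntegrable 0 (t - z k)).1)
        ((ae_restrict_iff' measurableSet_Ioc).2 (Filter.Eventually.of_forall hnn)),
        ← lintegral_indicator measurableSet_Ioc]
      simp only [J]
      refine lintegral_congr fun w => ?_
      rw [← hk]
      by_cases hw : w ∈ Set.Ioc 0 (t - z k)
      · rw [Set.indicator_of_mem hw, (ih _ (upd_mono k z hz _) (hmem w hw)).2, rho,
          Set.indicator_of_mem (show w ∈ Set.Ioi 0 from hw.1),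
          ENNReal.ofReal_mul (Real.exp_pos _).le]
      · rw [Set.indicator_of_notMem hw]
        by_cases hw0 : 0 < w
        · rw [J_of_exists_gt hq t r _ k, mul_zero]
          have : t - z k < w := by
            by_contra h
            exact hw ⟨hw0, not_lt.1 h⟩
          unfold upd
          rw [if_neg (lt_irrefl _)]
          exact lt_max_of_lt_right (by linarith)
        · rw [rho, Set.indicator_of_notMem (by simpa using hw0), zero_mul]

/-- Extension of a finite weight vector by zero to all indices. -/
def extendZero {r : ℕ} (w : Fin r → ℝ) : ℕ → ℝ := fun s => if h : s < r then w ⟨s, h⟩ else 0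

lemma continuous_run {q : ℕ} (hq : 0 < q) (r : ℕ) {X : Type*} [TopologicalSpace X]
    {w : X → ℕ → ℝ} {z : X → Fin q → ℝ} (hw : Continuous w) (hz : Continuous z) :
    Continuous fun x => run hq (w x) r (z x) := by
  induction r generalizing z with
  | zero => exact hz
  | succ r ih =>
    simp only [run]
    refine ih ?_
    refine continuous_pi fun l => ?_
    have h1 : ∀ l, Continuous fun x => z x l := fun l => (continuous_apply l).comp hz
    have h2 : Continuous fun x => w x r := (continuous_apply r).comp hw
    unfold upd
    split_ifs
    · exact h1 l
    · exact (h1 l).max ((h1 _).add h2)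

lemma continuous_extendZero {r : ℕ} : Continuous (extendZero : (Fin r → ℝ) → ℕ → ℝ) := by
  refine continuous_pi fun s => ?_
  unfold extendZero
  split_ifs with h
  · exact continuous_apply _
  · exact continuous_const

lemma isClosed_below {q : ℕ} (t : ℝ) : IsClosed {z : Fin q → ℝ | ∀ l, z l ≤ t} := by
  simp only [Set.ofPred_forall]
  exact isClosed_iInter fun l => isClosed_le (continuous_apply l) continuous_const

lemma measurable_below {q : ℕ} (t : ℝ) : Measurable (below t : (Fin q → ℝ) → ENNReal) :=
  measurable_one.indicator (isClosed_below t).measurableSet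

lemma run_congr {q : ℕ} (hq : 0 < q) (r : ℕ) {w w' : ℕ → ℝ} (h : ∀ s < r, w s = w' s)
    (z : Fin q → ℝ) : run hq w r z = run hq w' r z := by
  induction r generalizing z with
  | zero => rfl
  | succ r ih =>
    simp only [run]
    rw [h r (Nat.lt_succ_self r)]
    exact ih (fun s hs => h s (by omega)) _

/-- Tonelli: the iterated integral as a single integral over all weights. -/
lemma J_eq_lintegral {q : ℕ} (hq : 0 < q) (t : ℝ) (r : ℕ) (z : Fin q → ℝ) :
    J hq t r z = ∫⁻ w : Fin r → ℝ, (∏ i, rho (w i)) * below t (run hq (extendZero w) r z) := by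
  induction r generalizing z with
  | zero =>
    have : (volume : Measure (Fin 0 → ℝ)) Set.univ = 1 := by
      rw [volume_pi, Measure.pi_univ]; simp
    simp [J, run, this]
  | succ r ih =>
    have hmp := (volume_preserving_piFinSuccAbove (fun _ : Fin (r + 1) => ℝ) (Fin.last r)).symm
    have hmeas : Measurable fun w : Fin (r + 1) → ℝ =>
        (∏ i, rho (w i)) * below t (run hq (extendZero w) (r + 1) z) := by
      refine Measurable.mul ?_ ?_
      · exact Finset.measurable_fun_prod _ fun i _ => measurable_rho.comp (measurable_pi_apply i)
      · exact (measurable_below t).comp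
          (continuous_run hq (r + 1) continuous_extendZero continuous_const).measurable
    rw [← hmp.lintegral_comp hmeas]
    refine Eq.trans ?_ (lintegral_prod _ (hmeas.comp hmp.measurable).aemeasurable).symm
    simp only [J]
    refine lintegral_congr fun x => ?_
    rw [ih, ← lintegral_const_mul]
    · refine lintegral_congr fun w => ?_
      have e0 : (MeasurableEquiv.piFinSuccAbove (fun _ : Fin (r + 1) => ℝ) (Fin.last r)).symm (x, w)
          = Fin.snoc (α := fun _ => ℝ) w x := by
        show Fin.insertNth (α := fun _ => ℝ) (Fin.last r) x w = _
        rw [Fin.insertNth_last']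
      rw [Function.comp_apply, e0, Fin.prod_univ_castSucc]
      simp only [Fin.snoc_castSucc, Fin.snoc_last, run]
      have e1 : extendZero (Fin.snoc (α := fun _ => ℝ) w x) r = x := by
        simp [extendZero, Fin.snoc]
      have e2 : ∀ s < r, extendZero (Fin.snoc (α := fun _ => ℝ) w x) s = extendZero w s := by
        intro s hs
        simp [extendZero, Fin.snoc, hs, Nat.lt_succ_of_lt hs]
      rw [e1, run_congr hq r e2]
      ring
    · refine Measurable.mul ?_ ?_
      · exact Finset.measurable_fun_prod _ fun i _ => measurable_rho.comp (measurable_pi_apply i)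
      · exact (measurable_below t).comp
          (continuous_run hq r continuous_extendZero continuous_const).measurable

/-! ### Last-passage values as profiles -/

/-- Last-passage values with indices shifted by one, so that row `0` and column `0` are a zero
boundary. Since the weights are nonnegative, this boundary does not affect the maximum. -/
noncomputable def G (W : ℕ → ℕ → ℝ) : ℕ → ℕ → ℝ
  | 0, _ => 0
  | _ + 1, 0 => 0
  | i + 1, j + 1 => W i j + max (G W i (j + 1)) (G W (i + 1) j)

lemma G_zero_right (W : ℕ → ℕ → ℝ) (i : ℕ) : G W i 0 = 0 := by
  cases i <;> simp [G]

lemma G_nonneg {W : ℕ → ℕ → ℝ} (hW : ∀ i j, 0 ≤ W i j) (i j : ℕ) : 0 ≤ G W i j := by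
  induction i generalizing j with
  | zero => simp [G]
  | succ i ih =>
    cases j with
    | zero => simp [G]
    | succ j =>
      rw [G]
      exact add_nonneg (hW _ _) (le_max_of_le_left (ih _))

lemma G_le_right {W : ℕ → ℕ → ℝ} (hW : ∀ i j, 0 ≤ W i j) (i j : ℕ) :
    G W i j ≤ G W i (j + 1) := by
  cases i with
  | zero => simp [G]
  | succ i =>
    rw [G]
    linarith [hW i j, le_max_right (G W i (j + 1)) (G W (i + 1) j)]

lemma pathSum_le_G {W : ℕ → ℕ → ℝ} (hW : ∀ i j, 0 ≤ W i j) (path : List (ℕ × ℕ)) (i j : ℕ)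
    (hlast : path.getLast? = some (i, j))
    (hchain : List.IsChain (fun a b => b = (a.1 + 1, a.2) ∨ b = (a.1, a.2 + 1)) path) :
    pathSum W path ≤ G W (i + 1) (j + 1) := by
  induction path using List.reverseRecOn generalizing i j with
  | nil => simp at hlast
  | append_singleton l a ih =>
    simp only [List.getLast?_append, List.getLast?_singleton, Option.some_or,
      Option.some.injEq] at hlast
    subst hlast
    rw [List.isChain_append] at hchain
    obtain ⟨hl, -, hla⟩ := hchain
    have hsum : pathSum W (l ++ [(i, j)]) = pathSum W l + W i j := by simp [pathSum]
    rw [hsum, G]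
    rcases List.eq_nil_or_concat' l with rfl | ⟨l', b, rfl⟩
    · have : 0 ≤ max (G W i (j + 1)) (G W (i + 1) j) := le_max_of_le_left (G_nonneg hW _ _)
      simp only [pathSum, List.map_nil, List.sum_nil]
      linarith
    · have h1 := hla b (by simp) (i, j) (by simp)
      have h2 := ih b.1 b.2 (by simp) hl
      rcases h1 with h1 | h1
      · obtain ⟨rfl, rfl⟩ := Prod.mk.inj h1
        linarith [le_max_left (G W (b.1 + 1) (b.2 + 1)) (G W (b.1 + 1 + 1) b.2)]
      · obtain ⟨rfl, rfl⟩ := Prod.mk.inj h1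
        linarith [le_max_right (G W b.1 (b.2 + 1 + 1)) (G W (b.1 + 1) (b.2 + 1))]

lemma exists_path (W : ℕ → ℕ → ℝ) (hW : ∀ i j, 0 ≤ W i j) (i j : ℕ) :
    ∃ path : List (ℕ × ℕ), path.head? = some (0, 0) ∧ path.getLast? = some (i, j) ∧
      List.IsChain (fun a b => b = (a.1 + 1, a.2) ∨ b = (a.1, a.2 + 1)) path ∧
      pathSum W path = G W (i + 1) (j + 1) := by
  have key : ∀ n i j, i + j = n → ∃ path : List (ℕ × ℕ), path.head? = some (0, 0) ∧
      path.getLast? = some (i, j) ∧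
      List.IsChain (fun a b => b = (a.1 + 1, a.2) ∨ b = (a.1, a.2 + 1)) path ∧
      pathSum W path = G W (i + 1) (j + 1) := by
    intro n
    induction n with
    | zero =>
      intro i j hij
      obtain rfl : i = 0 := by omega
      obtain rfl : j = 0 := by omega
      exact ⟨[(0, 0)], by simp, by simp, by simp, by simp [pathSum, G]⟩
    | succ n ih =>
      intro i j hij
      have hext : ∀ a : ℕ × ℕ, a.1 + a.2 = n → ((i, j) = (a.1 + 1, a.2) ∨ (i, j) = (a.1, a.2 + 1)) →
          G W (i + 1) (j + 1) = W i j + G W (a.1 + 1) (a.2 + 1) →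
          ∃ path : List (ℕ × ℕ), path.head? = some (0, 0) ∧ path.getLast? = some (i, j) ∧
            List.IsChain (fun a b => b = (a.1 + 1, a.2) ∨ b = (a.1, a.2 + 1)) path ∧
            pathSum W path = G W (i + 1) (j + 1) := by
        intro a ha hstep hG
        obtain ⟨l, h1, h2, h3, h4⟩ := ih a.1 a.2 ha
        refine ⟨l ++ [(i, j)], ?_, by simp, ?_, ?_⟩
        · rw [List.head?_append, h1]; rfl
        · rw [List.isChain_append]
          refine ⟨h3, by simp, ?_⟩
          intro x hx y hy
          rw [h2] at hx
          simp at hx hy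
          subst hx; subst hy
          exact hstep
        · have hsum : pathSum W (l ++ [(i, j)]) = pathSum W l + W i j := by simp [pathSum]
          rw [hsum, h4, hG, add_comm]
      rcases le_total (G W i (j + 1)) (G W (i + 1) j) with h | h
      · cases j with
        | zero =>
          obtain ⟨i, rfl⟩ : ∃ k, i = k + 1 := ⟨i - 1, by omega⟩
          refine hext (i, 0) (by simp; omega) (Or.inl rfl) ?_
          rw [G, max_eq_left]
          rw [G]
          exact G_nonneg hW _ _
        | succ j =>
          refine hext (i, j) (by simp; omega) (Or.inr rfl) ?_
          rw [G, max_eq_right h]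
      · cases i with
        | zero =>
          obtain ⟨j, rfl⟩ : ∃ k, j = k + 1 := ⟨j - 1, by omega⟩
          refine hext (0, j) (by simp; omega) (Or.inr rfl) ?_
          rw [G, max_eq_right]
          rw [G]
          exact G_nonneg hW _ _
        | succ i =>
          refine hext (i, j) (by simp; omega) (Or.inl rfl) ?_
          rw [G, max_eq_left h]
  exact key _ i j rfl

/-- The last-passage recursion: the maximum over paths is computed by `G`. -/
lemma Lreal_eq_G {p q : ℕ} (hp : 1 ≤ p) (hq : 1 ≤ q) {W : ℕ → ℕ → ℝ} (hW : ∀ i j, 0 ≤ W i j) :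
    Lreal p q W = G W p q := by
  obtain ⟨p, rfl⟩ : ∃ k, p = k + 1 := ⟨p - 1, by omega⟩
  obtain ⟨q, rfl⟩ : ∃ k, q = k + 1 := ⟨q - 1, by omega⟩
  refine IsGreatest.csSup_eq ⟨?_, ?_⟩
  · obtain ⟨path, h1, h2, h3, h4⟩ := exists_path W hW p q
    exact ⟨path, ⟨h1, h2, h3⟩, h4.symm⟩
  · rintro s ⟨path, ⟨-, h2, h3⟩, rfl⟩
    exact pathSum_le_G hW path p q h2 h3

/-- The profile when the first `c` cells, in row-by-row order, have been processed. Columns already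
treated in the current row carry their new value; the other columns carry the value above them or
the last value of the current row, whichever is larger. This makes the profile nondecreasing. -/
noncomputable def profile (q : ℕ) (W : ℕ → ℕ → ℝ) (c : ℕ) : Fin q → ℝ := fun l =>
  if (l : ℕ) < c % q then G W (c / q + 1) (l + 1)
  else max (G W (c / q) (l + 1)) (G W (c / q + 1) (c % q))

/-- Processing the cell number `c` is the update `upd`, by the recursion for `G`. -/
lemma profile_succ {q : ℕ} {W : ℕ → ℕ → ℝ} (hW : ∀ i j, 0 ≤ W i j) (c : ℕ)
    (k : Fin q) (hk : (k : ℕ) = c % q) :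
    upd k (profile q W c) (profile q W c k + W (c / q) (c % q)) = profile q W (c + 1) := by
  have hq : 0 < q := k.pos
  have hkv : profile q W c k + W (c / q) (c % q) = G W (c / q + 1) (c % q + 1) := by
    simp only [profile, hk, lt_irrefl, if_false]
    rw [G, add_comm]
  rw [hkv]
  funext l
  have hcq := Nat.div_add_mod c q
  have hmod := Nat.mod_lt c hq
  have hmono : G W (c / q + 1) (c % q) ≤ G W (c / q + 1) (c % q + 1) := G_le_right hW _ _
  have hup : max (G W (c / q) (c % q + 1)) (G W (c / q + 1) (c % q + 1))
      = G W (c / q + 1) (c % q + 1) := by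
    refine max_eq_right ?_
    rw [G]
    linarith [hW (c / q) (c % q), le_max_left (G W (c / q) (c % q + 1)) (G W (c / q + 1) (c % q))]
  have hlk : l < k ↔ (l : ℕ) < c % q := by rw [← hk]; rfl
  have hval : upd k (profile q W c) (G W (c / q + 1) (c % q + 1)) l =
      if (l : ℕ) < c % q + 1 then G W (c / q + 1) (l + 1) else
        max (G W (c / q) (l + 1)) (G W (c / q + 1) (c % q + 1)) := by
    unfold upd
    by_cases h1 : (l : ℕ) < c % q
    · rw [if_pos (hlk.2 h1), if_pos (by omega)]
      simp [profile, h1]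
    · rw [if_neg (fun h => h1 (hlk.1 h))]
      simp only [profile, if_neg h1]
      rw [max_assoc, max_eq_right hmono]
      by_cases h2 : (l : ℕ) < c % q + 1
      · have : (l : ℕ) = c % q := by omega
        rw [if_pos h2, this, hup]
      · rw [if_neg h2]
  rw [hval]
  by_cases hend : c % q + 1 < q
  · have hd : (c + 1) / q = c / q := by
      rw [Nat.div_eq_iff hq, mul_comm]; omega
    have hm : (c + 1) % q = c % q + 1 := by
      have := Nat.div_add_mod (c + 1) q
      rw [hd] at this; omega
    simp only [profile, hd, hm]
  · have hd : (c + 1) / q = c / q + 1 := by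
      rw [Nat.div_eq_iff hq, add_mul, mul_comm]; omega
    have hm : (c + 1) % q = 0 := by
      have := Nat.div_add_mod (c + 1) q
      rw [hd, mul_add] at this; omega
    simp only [profile, hd, hm]
    rw [if_pos (by omega), if_neg (by omega), G_zero_right, max_eq_left (G_nonneg hW _ _)]

lemma run_profile {p q : ℕ} (hq : 0 < q) {W : ℕ → ℕ → ℝ} (hW : ∀ i j, 0 ≤ W i j) {w : ℕ → ℝ}
    (hw : ∀ c r, c + r + 1 = p * q → w r = W (c / q) (c % q)) (r c : ℕ) (hrc : c + r = p * q) :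
    run hq w r (profile q W c) = profile q W (p * q) := by
  induction r generalizing c with
  | zero => rw [← hrc]; rfl
  | succ r ih =>
    have hk : ((cell hq r : Fin q) : ℕ) = c % q := by
      show q - 1 - r % q = c % q
      have h1 := Nat.mod_lt r hq
      have h2 := Nat.mod_lt c hq
      have h3 : (c % q + r % q + 1) % q = 0 := by
        have h : c % q + r % q + 1 ≡ c + r + 1 [MOD q] :=
          ((Nat.mod_modEq c q).add (Nat.mod_modEq r q)).add_right 1
        rw [h, add_assoc, hrc, Nat.mul_mod_left]
      have h4 := Nat.dvd_of_mod_eq_zero h3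
      obtain ⟨d, hd⟩ := h4
      have : d = 1 := by
        rcases d with _ | _ | d
        · omega
        · rfl
        · nlinarith
      subst this
      omega
    rw [run, hw c r (by omega), profile_succ hW c _ hk]
    exact ih (c + 1) (by omega)

/-- The event expressed through `run`: the final profile is the last row of `G`, which is
nondecreasing, so it is bounded by `t` exactly when its last entry, the last-passage value, is. -/
lemma run_below_iff {p q : ℕ} (hp : 1 ≤ p) (hq : 0 < q) {W : ℕ → ℕ → ℝ} (hW : ∀ i j, 0 ≤ W i j)
    {w : ℕ → ℝ} (hw : ∀ c r, c + r + 1 = p * q → w r = W (c / q) (c % q)) (t : ℝ) :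
    (∀ l, run hq w (p * q) 0 l ≤ t) ↔ Lreal p q W ≤ t := by
  have h0 : (0 : Fin q → ℝ) = profile q W 0 := by
    funext l
    simp [profile, G]
  have h1 : profile q W (p * q) = fun l : Fin q => G W p (l + 1) := by
    funext l
    simp only [profile, Nat.mul_mod_left, Nat.mul_div_cancel _ hq, not_lt_zero, if_false,
      G_zero_right]
    exact max_eq_left (G_nonneg hW _ _)
  rw [h0, run_profile hq hW hw (p * q) 0 (by simp), h1, Lreal_eq_G hp hq hW]
  have hmono : Monotone (G W p) := monotone_nat_of_le_succ (G_le_right hW p)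
  constructor
  · intro h
    have := h ⟨q - 1, by omega⟩
    simpa [Nat.sub_add_cancel (show 1 ≤ q from hq)] using this
  · intro h l
    exact (hmono (show (l : ℕ) + 1 ≤ q from l.2)).trans h

/-! ### Reduction to the Laguerre weight -/

/-- Andréief's identity (the continuous Cauchy–Binet formula), together with the integrability of the
product of determinants. -/
lemma andreief {q : ℕ} (ν : Measure ℝ) [SigmaFinite ν] (f g : Fin q → ℝ → ℝ)
    (h : ∀ i j, Integrable (fun x => f i x * g j x) ν) :
    Integrable (fun x : Fin q → ℝ => (Matrix.of fun i k => f i (x k)).det *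
        (Matrix.of fun j k => g j (x k)).det) (Measure.pi fun _ => ν) ∧
      ∫ x : Fin q → ℝ, (Matrix.of fun i k => f i (x k)).det *
        (Matrix.of fun j k => g j (x k)).det ∂(Measure.pi fun _ => ν) =
      (q.factorial : ℝ) * (Matrix.of fun i j => ∫ x, f i x * g j x ∂ν).det := by
  have hexp : (fun x : Fin q → ℝ => (Matrix.of fun i k => f i (x k)).det *
        (Matrix.of fun j k => g j (x k)).det) = fun x =>
      ∑ σ : Equiv.Perm (Fin q), ∑ τ : Equiv.Perm (Fin q),
        (((Equiv.Perm.sign σ : ℤ) : ℝ) * ((Equiv.Perm.sign τ : ℤ) : ℝ)) *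
          ∏ k, (f (σ k) (x k) * g (τ k) (x k)) := by
    funext x
    rw [Matrix.det_apply', Matrix.det_apply', Finset.sum_mul_sum]
    refine Finset.sum_congr rfl fun σ _ => Finset.sum_congr rfl fun τ _ => ?_
    simp only [Matrix.of_apply, Finset.prod_mul_distrib]
    ring
  have hint : ∀ σ τ : Equiv.Perm (Fin q), Integrable (fun x : Fin q → ℝ =>
      (((Equiv.Perm.sign σ : ℤ) : ℝ) * ((Equiv.Perm.sign τ : ℤ) : ℝ)) *
          ∏ k, (f (σ k) (x k) * g (τ k) (x k))) (Measure.pi fun _ => ν) := fun σ τ =>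
    (Integrable.fintype_prod (f := fun k y => f (σ k) y * g (τ k) y)
      fun k => h (σ k) (τ k)).const_mul _
  rw [hexp]
  refine ⟨integrable_finsetSum _ fun σ _ => integrable_finsetSum _ fun τ _ => hint σ τ, ?_⟩
  rw [integral_finsetSum _ fun σ _ => integrable_finsetSum _ fun τ _ => hint σ τ]
  have hσ : ∀ σ : Equiv.Perm (Fin q), ∫ x : Fin q → ℝ, ∑ τ : Equiv.Perm (Fin q),
        (((Equiv.Perm.sign σ : ℤ) : ℝ) * ((Equiv.Perm.sign τ : ℤ) : ℝ)) *
          ∏ k, (f (σ k) (x k) * g (τ k) (x k)) ∂(Measure.pi fun _ => ν) =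
        (Matrix.of fun i j => ∫ x, f i x * g j x ∂ν).det := by
    intro σ
    rw [integral_finsetSum _ fun τ _ => hint σ τ]
    have hτ : ∀ τ : Equiv.Perm (Fin q), ∫ x : Fin q → ℝ,
        (((Equiv.Perm.sign σ : ℤ) : ℝ) * ((Equiv.Perm.sign τ : ℤ) : ℝ)) *
          ∏ k, (f (σ k) (x k) * g (τ k) (x k)) ∂(Measure.pi fun _ => ν) =
        ((Equiv.Perm.sign σ : ℤ) : ℝ) * (((Equiv.Perm.sign τ : ℤ) : ℝ) *
          ∏ k, ∫ x, f (σ k) x * g (τ k) x ∂ν) := by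
      intro τ
      rw [integral_const_mul,
        integral_fintype_prod_eq_prod (f := fun k y => f (σ k) y * g (τ k) y), mul_assoc]
    simp_rw [hτ]
    rw [← Finset.mul_sum]
    have h2 := Matrix.det_permute σ (Matrix.of fun i j => ∫ x, f i x * g j x ∂ν)
    rw [← Matrix.det_transpose, Matrix.det_apply'] at h2
    simp only [Matrix.transpose_apply, Matrix.submatrix_apply, Matrix.of_apply, id] at h2
    rw [h2, ← mul_assoc, ← Int.cast_mul, ← Units.val_mul, Int.units_mul_self]
    simp
  simp_rw [hσ]
  simp [Fintype.card_perm]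

lemma Vdm_eq (q : ℕ) (x : Fin q → ℝ) : Vdm q x = ∏ i, ∏ j ∈ Finset.Ioi i, (x i - x j) := by
  unfold Vdm
  rw [Finset.prod_filter, ← Finset.univ_product_univ, Finset.prod_product]
  refine Finset.prod_congr rfl fun i _ => ?_
  rw [← Finset.prod_filter]
  refine Finset.prod_congr ?_ fun _ _ => rfl
  ext j; simp

lemma det_sub_pow (q : ℕ) (t : ℝ) (x : Fin q → ℝ) :
    (Matrix.of fun i k : Fin q => (t - x k) ^ (i : ℕ)).det = Vdm q x := by
  rw [← Matrix.det_transpose]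
  have : (Matrix.of fun i k : Fin q => (t - x k) ^ (i : ℕ)).transpose =
      Matrix.vandermonde fun k => t - x k := by
    ext i k; simp [Matrix.vandermonde]
  rw [this, Matrix.det_vandermonde, Vdm_eq]
  exact Finset.prod_congr rfl fun i _ => Finset.prod_congr rfl fun j _ => by ring

/-- A determinant of polynomials of degree less than `q` is a constant multiple of the Vandermonde
determinant. -/
lemma det_poly (q : ℕ) (b : Fin q → Polynomial ℝ) (hb : ∀ j, (b j).natDegree < q) :
    ∃ C : ℝ, ∀ x : Fin q → ℝ,
      (Matrix.of fun j k : Fin q => (b j).eval (x k)).det = C * Vdm q x := by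
  refine ⟨(Matrix.of fun j m : Fin q => (b j).coeff m).det *
    ∏ i : Fin q, ∏ j ∈ Finset.Ioi i, (-1 : ℝ), fun x => ?_⟩
  have h1 : (Matrix.of fun j k : Fin q => (b j).eval (x k)) =
      (Matrix.of fun j m : Fin q => (b j).coeff m) * (Matrix.vandermonde x).transpose := by
    ext j k
    rw [Matrix.mul_apply, Matrix.of_apply, Polynomial.eval_eq_sum_range' (hb j),
      ← Fin.sum_univ_eq_sum_range (fun m => (b j).coeff m * x k ^ m)]
    simp [Matrix.vandermonde]
  rw [h1, Matrix.det_mul, Matrix.det_transpose, Matrix.det_vandermonde, Vdm_eq, mul_assoc]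
  congr 1
  rw [← Finset.prod_mul_distrib]
  refine Finset.prod_congr rfl fun i _ => ?_
  rw [← Finset.prod_mul_distrib]
  exact Finset.prod_congr rfl fun j _ => by ring

/-- The unnormalized Laguerre weight `Δ_q(x)² ∏ xᵢ ^ a exp (-xᵢ)`. -/
noncomputable def lag (q a : ℕ) (x : Fin q → ℝ) : ℝ :=
  (Vdm q x) ^ 2 * ∏ i, ((x i) ^ a * Real.exp (-(x i)))

lemma integrable_lag (q a : ℕ) :
    IntegrableOn (lag q a) (Set.univ.pi fun _ => Set.Ioi (0 : ℝ)) := by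
  have hint : ∀ i j : Fin q, Integrable
      (fun x : ℝ => (0 - x) ^ (i : ℕ) * ((0 - x) ^ (j : ℕ) * (x ^ a * Real.exp (-x))))
      (volume.restrict (Set.Ioi (0 : ℝ))) := by
    intro i j
    have h := (Real.GammaIntegral_convergent (s := ((i + j + a : ℕ) : ℝ) + 1) (by positivity))
    have h2 := h.const_mul ((-1 : ℝ) ^ ((i : ℕ) + j))
    refine (IntegrableOn.congr_fun h2 ?_ measurableSet_Ioi :)
    intro x hx
    simp only [add_sub_cancel_right, Real.rpow_natCast, zero_sub]
    rw [neg_pow x (i : ℕ), neg_pow x (j : ℕ)]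
    ring
  obtain ⟨h, -⟩ := andreief (q := q) (volume.restrict (Set.Ioi (0 : ℝ)))
    (fun i x => (0 - x) ^ (i : ℕ)) (fun j x => (0 - x) ^ (j : ℕ) * (x ^ a * Real.exp (-x))) hint
  rw [IntegrableOn, volume_pi, Measure.restrict_pi_pi]
  refine h.congr (Filter.Eventually.of_forall fun x => ?_)
  have := Matrix.det_mul_row (fun k => x k ^ a * Real.exp (-x k))
    (Matrix.of fun i k : Fin q => (0 - x k) ^ (i : ℕ))
  simp only [Matrix.of_apply] at this
  simp only [lag]
  simp_rw [mul_comm ((0 - x _) ^ _) (x _ ^ a * _)]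
  rw [this, det_sub_pow]
  ring

/-- Taylor's formula at `0` with integral remainder, when the Taylor polynomial vanishes. -/
lemma D_taylor (q n : ℕ) (t : ℝ) (l m : ℕ)
    (h : ∀ m', m ≤ m' → m' ≤ m + l → D q n m' 0 = 0) :
    D q n m t = ∫ y in (0 : ℝ)..t, (t - y) ^ l / (l.factorial : ℝ) * D q n (m + l + 1) y := by
  induction l with
  | zero =>
    have := intervalIntegral.integral_eq_sub_of_hasDerivAt (a := 0) (b := t)
      (fun x _ => hasDerivAt_D q n m x) ((continuous_D q n (m + 1)).intervalIntegrable _ _)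
    simp [this, h m le_rfl (by omega)]
  | succ l ih =>
    rw [ih fun m' h1 h2 => h m' h1 (by omega)]
    have hu : ∀ y, HasDerivAt (fun y => (t - y) ^ (l + 1) / ((l + 1).factorial : ℝ))
        (-((t - y) ^ l / (l.factorial : ℝ))) y := fun y => by
      have h1 := (((hasDerivAt_id y).const_sub t).pow (l + 1)).div_const ((l + 1).factorial : ℝ)
      refine h1.congr_deriv ?_
      have := Nat.factorial_ne_zero l
      rw [Nat.factorial_succ]
      push_cast
      simp
      field_simp
    have := intervalIntegral.integral_mul_deriv_eq_deriv_mul (a := 0) (b := t)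
      (fun y _ => hu y) (fun y _ => hasDerivAt_D q n (m + l + 1) y)
      (Continuous.intervalIntegrable (by fun_prop) _ _)
      ((continuous_D q n (m + l + 1 + 1)).intervalIntegrable _ _)
    rw [← add_assoc, this, h (m + l + 1) (by omega) (by omega)]
    simp [intervalIntegral.integral_neg]

/-- Taylor's formula writes row `l` of `V` at the zero profile as an integral against
`(t - y) ^ l / l!`, whose other factor, for column `j`, is a polynomial of degree less than `q`
times `y ^ (p - q) * exp (-y)`. Both determinants of Andréief's identity are then Vandermonde
determinants up to constants, and the constant does not depend on `t`. -/
lemma V_eq_lag {p q : ℕ} (hq : 1 ≤ q) (hpq : q ≤ p) : ∃ C : ℝ, ∀ t : ℝ, 0 ≤ t →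
    V q t (p * q) 0 =
      C * ∫ x in Set.univ.pi fun _ : Fin q => Set.Ioo (0 : ℝ) t, lag q (p - q) x := by
  have hb : ∀ j : Fin q, ∃ P : Polynomial ℝ, P.natDegree < q ∧
      ∀ u, D q p (q + j) u = P.eval u * (u ^ (p - q) * Real.exp (-u)) := by
    intro j
    obtain ⟨P, hP, h⟩ := D_gamma_deriv q (p - 1) hq j (by omega)
    refine ⟨Polynomial.X ^ (q - 1 - j) * P, ?_, fun u => ?_⟩
    · have := Polynomial.natDegree_mul_le (p := Polynomial.X ^ (q - 1 - (j : ℕ))) (q := P)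
      rw [Polynomial.natDegree_X_pow] at this
      omega
    · have h1 := h u
      rw [Nat.sub_add_cancel (by omega), show p - 1 - (j : ℕ) = (p - q) + (q - 1 - j) by omega,
        pow_add] at h1
      rw [h1]
      simp only [Polynomial.eval_mul, Polynomial.eval_pow, Polynomial.eval_X]
      ring
  choose b hbdeg hbD using hb
  obtain ⟨C, hC⟩ := det_poly q b hbdeg
  refine ⟨(∏ l : Fin q, 1 / ((l : ℕ).factorial : ℝ)) * (C / (q.factorial : ℝ)), fun t ht => ?_⟩
  have hint : ∀ i j : Fin q, Integrable
      (fun x : ℝ => (t - x) ^ (i : ℕ) * ((x ^ (p - q) * Real.exp (-x)) * (b j).eval x))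
      (volume.restrict (Set.Ioo (0 : ℝ) t)) := by
    intro i j
    refine (Continuous.integrableOn_Icc (a := 0) (b := t) ?_).mono_set Set.Ioo_subset_Icc_self
    have := (b j).continuous
    fun_prop
  obtain ⟨-, hA⟩ := andreief (q := q) (volume.restrict (Set.Ioo (0 : ℝ) t))
    (fun i x => (t - x) ^ (i : ℕ)) (fun j x => (x ^ (p - q) * Real.exp (-x)) * (b j).eval x) hint
  have hdet : ∀ x : Fin q → ℝ, (Matrix.of fun i k : Fin q => (t - x k) ^ (i : ℕ)).det *
      (Matrix.of fun j k : Fin q => (x k ^ (p - q) * Real.exp (-x k)) * (b j).eval (x k)).det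
      = C * lag q (p - q) x := by
    intro x
    have := Matrix.det_mul_row (fun k => x k ^ (p - q) * Real.exp (-x k))
      (Matrix.of fun j k : Fin q => (b j).eval (x k))
    simp only [Matrix.of_apply] at this
    rw [this, hC, det_sub_pow, lag]
    ring
  simp_rw [hdet] at hA
  rw [integral_const_mul, ← Measure.restrict_pi_pi, ← volume_pi] at hA
  have hV : V q t (p * q) 0 = (∏ l : Fin q, 1 / ((l : ℕ).factorial : ℝ)) *
      (Matrix.of fun i j : Fin q => ∫ x in Set.Ioo (0 : ℝ) t,
        (t - x) ^ (i : ℕ) * ((x ^ (p - q) * Real.exp (-x)) * (b j).eval x)).det := by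
    rw [← Matrix.det_mul_column]
    unfold V
    congr 1
    ext l j
    simp only [Matrix.of_apply]
    have e1 : (p * q + (l : ℕ)) / q = p := by
      rw [Nat.div_eq_iff (by omega)]; omega
    rw [e1, Pi.zero_apply, sub_zero, D_taylor q p t l (q - 1 - l + j)
      (fun m' h1 h2 => D_at_zero q p m' (by omega)), intervalIntegral.integral_of_le ht,
      integral_Ioc_eq_integral_Ioo, ← integral_const_mul]
    refine integral_congr_ae (Filter.Eventually.of_forall fun y => ?_)
    have e2 : q - 1 - (l : ℕ) + j + l + 1 = q + j := by omega
    simp only [e2, hbD]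
    ring
  have hq0 : (q.factorial : ℝ) ≠ 0 := by exact_mod_cast Nat.factorial_ne_zero q
  rw [hV, mul_assoc]
  congr 1
  rw [div_mul_eq_mul_div, hA]
  field_simp

/-! ### The probability of the event and the normalization -/

/-- The matrix with entries `m`, extended by zero outside the index range. -/
def toMat {p q : ℕ} (m : Fin p × Fin q → ℝ) : ℕ → ℕ → ℝ :=
  fun i j => if h : i < p ∧ j < q then m (⟨i, h.1⟩, ⟨j, h.2⟩) else 0

/-- Numbering of the cells by the number of cells that come later in row-by-row order; this is the
indexing of the weights in `run`. -/
def cellEquiv (p q : ℕ) : Fin p × Fin q ≃ Fin (p * q) := finProdFinEquiv.trans Fin.revPerm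

lemma extendZero_cellEquiv {p q : ℕ} (m : Fin p × Fin q → ℝ) (c r : ℕ) (h : c + r + 1 = p * q) :
    extendZero (MeasurableEquiv.piCongrLeft (fun _ => ℝ) (cellEquiv p q) m) r =
      toMat m (c / q) (c % q) := by
  have hq : 0 < q := Nat.pos_of_ne_zero fun h0 => by subst h0; simp at h
  have h1 : c / q < p := by
    rw [Nat.div_lt_iff_lt_mul hq]; omega
  have h2 : c % q < q := Nat.mod_lt _ hq
  have h3 : r < p * q := by omega
  have he : (⟨r, h3⟩ : Fin (p * q)) = cellEquiv p q (⟨c / q, h1⟩, ⟨c % q, h2⟩) := by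
    ext
    have := Nat.mod_add_div c q
    simp only [cellEquiv, Equiv.trans_apply, Fin.revPerm_apply, Fin.val_rev,
      finProdFinEquiv_apply_val]
    omega
  rw [extendZero, dif_pos h3, he, toMat, dif_pos ⟨h1, h2⟩, MeasurableEquiv.coe_piCongrLeft,
    Equiv.piCongrLeft_apply_apply (fun _ => ℝ) (cellEquiv p q) m]

lemma run_toMat_iff {p q : ℕ} (hp : 1 ≤ p) (hq : 0 < q) (m : Fin p × Fin q → ℝ)
    (hm : ∀ ij, 0 < m ij) (t : ℝ) :
    (∀ l, run hq (extendZero (MeasurableEquiv.piCongrLeft (fun _ => ℝ) (cellEquiv p q) m))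
      (p * q) 0 l ≤ t) ↔ Lreal p q (toMat m) ≤ t := by
  refine run_below_iff hp hq (fun i j => ?_) (fun c r h => extendZero_cellEquiv m c r h) t
  unfold toMat
  split_ifs
  · exact (hm _).le
  · exact le_rfl

/-- The event that all entries are positive and the last-passage value is at most `t`. -/
def event (p q : ℕ) (t : ℝ) : Set (Fin p × Fin q → ℝ) :=
  {m | (∀ ij, 0 < m ij) ∧ Lreal p q (toMat m) ≤ t}

lemma event_eq {p q : ℕ} (hp : 1 ≤ p) (hq : 0 < q) (t : ℝ) :
    event p q t = (Set.univ.pi fun _ => Set.Ioi 0) ∩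
      (fun m => run hq (extendZero (MeasurableEquiv.piCongrLeft (fun _ => ℝ) (cellEquiv p q) m))
        (p * q) 0) ⁻¹' {z | ∀ l, z l ≤ t} := by
  ext m
  simp only [event, Set.mem_ofPred_eq, Set.mem_inter_iff, Set.mem_univ_pi, Set.mem_Ioi,
    Set.mem_preimage]
  exact and_congr_right fun hm => (run_toMat_iff hp hq m hm t).symm

lemma measurable_run_toMat {p q : ℕ} (hq : 0 < q) :
    Measurable fun m : Fin p × Fin q → ℝ =>
      run hq (extendZero (MeasurableEquiv.piCongrLeft (fun _ => ℝ) (cellEquiv p q) m)) (p * q) 0 :=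
  (continuous_run hq (p * q) continuous_extendZero continuous_const).measurable.comp
    (MeasurableEquiv.measurable _)

lemma measurableSet_event {p q : ℕ} (hp : 1 ≤ p) (hq : 0 < q) (t : ℝ) :
    MeasurableSet (event p q t) := by
  rw [event_eq hp hq]
  exact (MeasurableSet.univ_pi fun _ => measurableSet_Ioi).inter
    (measurable_run_toMat hq (isClosed_below t).measurableSet)

/-- The probability of the event is the determinant at the zero profile. -/
lemma setIntegral_event {p q : ℕ} (hp : 1 ≤ p) (hq : 0 < q) (t : ℝ) (ht : 0 ≤ t) :
    ∫ m in event p q t, ∏ ij, Real.exp (-(m ij)) = V q t (p * q) 0 := by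
  have h := J_eq_V hq t (p * q) 0 (fun _ _ _ => le_rfl) fun _ => ht
  rw [integral_eq_lintegral_of_nonneg_ae
    (Filter.Eventually.of_forall fun m => Finset.prod_nonneg fun _ _ => (Real.exp_pos _).le)
    (Continuous.aestronglyMeasurable (by fun_prop)),
    ← ENNReal.toReal_ofReal h.1, ← h.2, J_eq_lintegral,
    ← lintegral_indicator (measurableSet_event hp hq t),
    ← (volume_measurePreserving_piCongrLeft (fun _ => ℝ) (cellEquiv p q)).lintegral_comp_emb
      (MeasurableEquiv.measurableEmbedding _)]
  congr 1
  refine lintegral_congr fun m => ?_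
  have hprod : ∏ i, rho (MeasurableEquiv.piCongrLeft (fun _ => ℝ) (cellEquiv p q) m i) =
      ∏ ij, rho (m ij) := by
    rw [← (cellEquiv p q).prod_comp]
    refine Finset.prod_congr rfl fun ij _ => ?_
    rw [MeasurableEquiv.coe_piCongrLeft,
      Equiv.piCongrLeft_apply_apply (fun _ => ℝ) (cellEquiv p q) m]
  rw [hprod]
  by_cases hm : ∀ ij, 0 < m ij
  · have hr : ∏ ij, rho (m ij) = ENNReal.ofReal (∏ ij, Real.exp (-(m ij))) := by
      rw [ENNReal.ofReal_prod_of_nonneg fun _ _ => (Real.exp_pos _).le]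
      exact Finset.prod_congr rfl fun ij _ => Set.indicator_of_mem (hm ij) _
    have hiff := run_toMat_iff hp hq m hm t
    by_cases hL : Lreal p q (toMat m) ≤ t
    · rw [Set.indicator_of_mem (show m ∈ event p q t from ⟨hm, hL⟩), below,
        Set.indicator_of_mem (show _ ∈ {z : Fin q → ℝ | ∀ l, z l ≤ t} from hiff.2 hL), hr]
      simp
    · rw [Set.indicator_of_notMem (fun h : m ∈ event p q t => hL h.2), below,
        Set.indicator_of_notMem
          (fun h : _ ∈ {z : Fin q → ℝ | ∀ l, z l ≤ t} => hL (hiff.1 h)), mul_zero]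
  · rw [Set.indicator_of_notMem fun h : m ∈ event p q t => hm h.1]
    push Not at hm
    obtain ⟨ij, hij⟩ := hm
    rw [Finset.prod_eq_zero (Finset.mem_univ ij), zero_mul]
    exact Set.indicator_of_notMem (by simpa using hij) _

lemma integrableOn_exp_pos (p q : ℕ) :
    IntegrableOn (fun m : Fin p × Fin q → ℝ => ∏ ij, Real.exp (-(m ij)))
      (Set.univ.pi fun _ => Set.Ioi 0) := by
  rw [IntegrableOn, volume_pi, Measure.restrict_pi_pi]
  exact Integrable.fintype_prod (f := fun _ y => Real.exp (-y))
    fun _ => integrableOn_exp_neg_Ioi 0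

lemma setIntegral_exp_pos (p q : ℕ) :
    ∫ m in (Set.univ.pi fun _ : Fin p × Fin q => Set.Ioi (0 : ℝ)), ∏ ij, Real.exp (-(m ij)) =
      1 := by
  rw [volume_pi, Measure.restrict_pi_pi,
    integral_fintype_prod_eq_prod (f := fun _ y => Real.exp (-y))]
  simp only [integral_exp_neg_Ioi_zero, Finset.prod_const_one]

lemma iUnion_event (p q : ℕ) :
    ⋃ n : ℕ, event p q n = Set.univ.pi fun _ => Set.Ioi 0 := by
  ext m
  simp only [event, Set.mem_iUnion, Set.mem_ofPred_eq, Set.mem_univ_pi, Set.mem_Ioi]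
  exact ⟨fun ⟨_, h⟩ => h.1, fun h => (exists_nat_ge _).imp fun n hn => ⟨h, hn⟩⟩

lemma iUnion_cube (q : ℕ) :
    ⋃ n : ℕ, (Set.univ.pi fun _ : Fin q => Set.Ioo (0 : ℝ) n) =
      Set.univ.pi fun _ => Set.Ioi 0 := by
  ext x
  simp only [Set.mem_iUnion, Set.mem_univ_pi, Set.mem_Ioo, Set.mem_Ioi]
  refine ⟨fun ⟨_, h⟩ i => (h i).1, fun h => ?_⟩
  obtain ⟨n, hn⟩ := exists_nat_gt (∑ i, x i)
  exact ⟨n, fun i => ⟨h i, (Finset.single_le_sum (fun j _ => (h j).le)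
    (Finset.mem_univ i)).trans_lt hn⟩⟩

/-- The normalizing constant, found by letting `t → ∞`: the probability tends to `1` and the
Laguerre integral over the cube tends to the one over the orthant. -/
lemma const_mul_norm {p q : ℕ} (hp : 1 ≤ p) (hq : 0 < q) {C : ℝ}
    (hC : ∀ t : ℝ, 0 ≤ t → V q t (p * q) 0 =
      C * ∫ x in Set.univ.pi fun _ : Fin q => Set.Ioo (0 : ℝ) t, lag q (p - q) x) :
    C * ∫ x in Set.univ.pi fun _ : Fin q => Set.Ioi (0 : ℝ), lag q (p - q) x = 1 := by
  have h1 := tendsto_setIntegral_of_monotone (μ := volume)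
    (f := fun m : Fin p × Fin q → ℝ => ∏ ij, Real.exp (-(m ij)))
    (s := fun n : ℕ => event p q n) (fun n => measurableSet_event hp hq n)
    (fun a b hab m hm => ⟨hm.1, hm.2.trans (Nat.cast_le.2 hab)⟩)
    (by rw [iUnion_event]; exact integrableOn_exp_pos p q)
  have h2 := (tendsto_setIntegral_of_monotone (μ := volume) (f := lag q (p - q))
    (s := fun n : ℕ => Set.univ.pi fun _ : Fin q => Set.Ioo (0 : ℝ) n)
    (fun n => MeasurableSet.univ_pi fun _ => measurableSet_Ioo)
    (fun a b hab => Set.pi_mono fun _ _ => Set.Ioo_subset_Ioo_right (Nat.cast_le.2 hab))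
    (by rw [iUnion_cube]; exact integrable_lag q (p - q))).const_mul C
  rw [iUnion_event, setIntegral_exp_pos] at h1
  rw [iUnion_cube] at h2
  refine tendsto_nhds_unique h2 (h1.congr fun n => ?_)
  rw [setIntegral_event hp hq n n.cast_nonneg, hC n n.cast_nonneg]

end LPP

/-- For a `p×q` matrix of independent standard exponential entries, the probability that
the last-passage percolation value `L(M)` is at most `t` equals a ratio of Laguerre-type
Selberg integrals. -/
theorem stmt7 (p q : ℕ) (hq : 1 ≤ q) (hpq : q ≤ p) (t : ℝ) (ht : 0 ≤ t) :
    (∫ m : Fin p × Fin q → ℝ in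
        {m | (∀ ij, 0 < m ij) ∧
          Lreal p q (fun i j => if h : i < p ∧ j < q then m (⟨i, h.1⟩, ⟨j, h.2⟩) else 0) ≤ t},
        ∏ ij, Real.exp (-(m ij)))
      = (∫ x : Fin q → ℝ in Set.univ.pi (fun _ => Set.Ioo (0 : ℝ) t),
            (Vdm q x) ^ 2 * ∏ i, ((x i) ^ (p - q) * Real.exp (-(x i))))
        / (∫ x : Fin q → ℝ in Set.univ.pi (fun _ => Set.Ioi (0 : ℝ)),
            (Vdm q x) ^ 2 * ∏ i, ((x i) ^ (p - q) * Real.exp (-(x i)))) := by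
  obtain ⟨C, hC⟩ := LPP.V_eq_lag hq hpq
  have hZ := LPP.const_mul_norm (hq.trans hpq) hq hC
  have hL := (LPP.setIntegral_event (hq.trans hpq) hq t ht).trans (hC t ht)
  refine hL.trans ?_
  rw [eq_div_of_mul_eq (right_ne_zero_of_mul_eq_one hZ) hZ, one_div_mul_eq_div]
  rfl
end

section
/- For every real ξ > 0 and every integer n ≥ 1, the absolutely convergent sum Σ_λ ξ^{|λ|} (f^λ)²/(|λ|!)², taken over all partitions λ (of arbitrary weight, including the empty partition) with first part λ₁ ≤ n, equals the n×n Toeplitz determinant det(T_{k−ℓ})_{1≤k,ℓ≤n}, where T_m := (1/2π) ∫₀^{2π} e^{−imθ} e^{2√ξ cos θ} dθ is the m-th Fourier coefficient of e^{2√ξ cos θ}. Equivalently, e^{−ξ} Σ_{k≥0} (ξ^k/k!)·(#{π ∈ S_k : L(π) ≤ n}/k!) = e^{−ξ} det(T_{k−ℓ})_{1≤k,ℓ≤n}. -/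
/-!
The sum over partitions with `λ₁ ≤ n` is rewritten as a sum of squares of minors of a single
`ℕ × n` matrix, and the Cauchy–Binet formula turns it into an `n × n` Gram determinant, whose entries
turn out to be the Fourier coefficients.

* Conjugation preserves `f^λ` (`Gessel.syt_conj`) and turns `λ₁ ≤ n` into the condition of having at most `n` parts. For
  a partition `q` with at most `n` parts,
  `x ^ |q| f^q / |q|! = det (x ^ (qᵢ - i + j) / (qᵢ - i + j)!)` (`Gessel.JT_eq`). Both sides satisfy the
  branching rule obtained by deleting a corner (`Gessel.syt_succ`, `Gessel.JT_rec`).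
* With `x = √ξ` and `tᵢ = q_{n-1-i} + i`, the determinant is the minor on the rows `t` of the matrix
  `E s j = x ^ (s - j) / (s - j)!`. The tuples `t` are exactly the strictly increasing ones
  (`Gessel.toTup_bijective`). By Cauchy–Binet (`Gessel.hasSum_minor`), the sum of the squares of these
  minors is `det (∑ₛ E s j * E s k)`.
* Multiplying the two exponential series in
  `e ^ (2 x cos θ) = e ^ (x e ^ (iθ)) e ^ (x e ^ (-iθ))` and integrating term by term gives
  `∑ₛ E s j * E s k = T (j - k)` (`Gessel.hasSum_toeplitz`).

The second form of the sum follows from the Robinson–Schensted correspondence and Schensted's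
theorem: the number of permutations of `k` letters with `L(π) ≤ n` is the sum of `(f^λ)²` over
`λ ⊢ k` with `λ₁ ≤ n` (`Gessel.ncard_permLIS`). The correspondence is built here by growth diagrams. A
standard tableau is recorded by the lattice word of the rows in which its cells appear, and inserting
a new maximal value into a permutation changes this word by the reversible local rules `Gessel.ins`.
The count of permutations with a given word then satisfies the branching rule
(`Gessel.ncard_word`). Under insertion, the first rows of the partitions along the word obey
the recursion of the longest increasing subsequences of the prefixes (`Gessel.hasInc_iff`).
-/

open scoped BigOperators Classical

/-- The `i`-th largest element (0-indexed) of a multiset of naturals, `0` if absent. -/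
def nthPart (μ : Multiset ℕ) (i : ℕ) : ℕ :=
  ((μ.sort (· ≤ ·)).reverse).getD i 0

/-- Cells of the Young diagram whose parts are the multiset `μ`. -/
def shapeCells (μ : Multiset ℕ) : Finset (ℕ × ℕ) :=
  (Finset.range μ.card ×ˢ Finset.range (μ.sum + 1)).filter fun c => c.2 < nthPart μ c.1

/-- Number of standard Young tableaux of shape `μ`. -/
noncomputable def sytCount (μ : Multiset ℕ) : ℕ :=
  Set.ncard {T : ℕ × ℕ → ℕ |
    (∀ c, c ∉ shapeCells μ → T c = 0) ∧
    Set.BijOn T (shapeCells μ : Set (ℕ × ℕ)) (Set.Icc 1 μ.sum) ∧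
    (∀ i j, (i, j + 1) ∈ shapeCells μ → T (i, j) < T (i, j + 1)) ∧
    (∀ i j, (i + 1, j) ∈ shapeCells μ → T (i, j) < T (i + 1, j))}

/-- Length of the longest (strictly) increasing subsequence of a permutation of `{1,…,n}`. -/
noncomputable def permLIS (n : ℕ) (π : Equiv.Perm (Fin n)) : ℕ :=
  sSup {k : ℕ | ∃ s : Finset (Fin n), s.card = k ∧ StrictMonoOn (fun i => π i) (s : Set (Fin n))}

namespace Gessel

/-! ### Partitions as row length functions -/

/-- The cells of the diagram with row lengths `p 0, p 1, …`. -/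
def cells (p : ℕ → ℕ) : Set (ℕ × ℕ) := {c | c.2 < p c.1}

/-- `p` is (the row length function of) a partition of `k`. A partition is encoded throughout as a
weakly decreasing function `ℕ → ℕ` that vanishes somewhere. -/
def IsPart (k : ℕ) (p : ℕ → ℕ) : Prop :=
  Antitone p ∧ ∃ m, p m = 0 ∧ ∑ i ∈ Finset.range m, p i = k

/-- Remove one cell from row `b`. -/
def dec (p : ℕ → ℕ) (b : ℕ) : ℕ → ℕ := fun i => if i = b then p i - 1 else p i

/-- The conjugate partition: `conj p j` is the length of column `j`. -/
noncomputable def conj (p : ℕ → ℕ) (j : ℕ) : ℕ := sInf {i | p i ≤ j}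

lemma zero_of_le {p : ℕ → ℕ} (hp : Antitone p) {m i : ℕ} (h : p m = 0) (hi : m ≤ i) : p i = 0 :=
  Nat.le_zero.1 (h ▸ hp hi)

lemma sum_range_eq_of_zero {p : ℕ → ℕ} (hp : Antitone p) {m m' : ℕ} (h : p m = 0) (h' : m ≤ m') :
    ∑ i ∈ Finset.range m', p i = ∑ i ∈ Finset.range m, p i := by
  symm
  apply Finset.sum_subset (Finset.range_subset_range.2 h')
  intro i _ hi
  exact zero_of_le hp h (by simpa using hi)

lemma IsPart.sum_eq {k : ℕ} {p : ℕ → ℕ} (hp : IsPart k p) {m : ℕ} (hm : p m = 0) :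
    ∑ i ∈ Finset.range m, p i = k := by
  obtain ⟨ha, m', hm', hs⟩ := hp
  rcases le_total m m' with h | h
  · rw [← hs, sum_range_eq_of_zero ha hm h]
  · rw [← hs, sum_range_eq_of_zero ha hm' h]

lemma antitone_dec {p : ℕ → ℕ} (hp : Antitone p) {b : ℕ} (hb : p (b + 1) < p b) :
    Antitone (dec p b) := by
  apply antitone_nat_of_succ_le
  intro i
  have := hp (Nat.le_succ i)
  unfold dec
  simp only [Nat.succ_eq_add_one] at *
  split_ifs with h1 h2 h2 <;> subst_vars <;> omega

lemma lt_of_pos {p : ℕ → ℕ} (hp : Antitone p) {m b : ℕ} (hm : p m = 0) (hb : 0 < p b) : b < m := by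
  by_contra h
  have := zero_of_le hp hm (not_lt.1 h)
  omega

lemma IsPart.dec {k : ℕ} {p : ℕ → ℕ} (hp : IsPart (k + 1) p) {b : ℕ} (hb : p (b + 1) < p b) :
    IsPart k (dec p b) := by
  refine ⟨antitone_dec hp.1 hb, ?_⟩
  obtain ⟨ha, m, hm, hs⟩ := hp
  have hbm : b < m := lt_of_pos ha hm (by omega)
  refine ⟨m, by simp [Gessel.dec, hm], ?_⟩
  rw [← Finset.add_sum_erase _ _ (Finset.mem_range.2 hbm)] at hs ⊢
  have : ∑ x ∈ (Finset.range m).erase b, Gessel.dec p b x = ∑ x ∈ (Finset.range m).erase b, p x :=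
    Finset.sum_congr rfl fun x hx => by simp [Gessel.dec, (Finset.mem_erase.1 hx).1]
  rw [this]
  simp only [Gessel.dec, if_true]
  omega

lemma isPart_zero_iff {p : ℕ → ℕ} : IsPart 0 p ↔ p = 0 := by
  constructor
  · rintro ⟨ha, m, hm, hs⟩
    funext i
    rcases lt_or_ge i m with h | h
    · exact (Finset.sum_eq_zero_iff.1 hs) i (Finset.mem_range.2 h)
    · exact zero_of_le ha hm h
  · rintro rfl
    exact ⟨fun _ _ _ => le_rfl, 0, rfl, by simp⟩

/-- The cell `(i, j)` lies in a diagram iff `(j, i)` lies in the conjugate one. -/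
lemma lt_conj_iff {p : ℕ → ℕ} (hp : Antitone p) {m : ℕ} (hm : p m = 0) (i j : ℕ) :
    i < conj p j ↔ j < p i := by
  have hne : {i | p i ≤ j}.Nonempty := ⟨m, by simp [hm]⟩
  constructor
  · intro h
    by_contra h'
    exact absurd (Nat.sInf_le (show i ∈ {i | p i ≤ j} from not_lt.1 h')) (not_le.2 h)
  · intro h
    by_contra h'
    have h1 : p (conj p j) ≤ j := Nat.sInf_mem hne
    have h2 := hp (not_lt.1 h')
    omega

lemma antitone_conj {p : ℕ → ℕ} (hp : Antitone p) {m : ℕ} (hm : p m = 0) : Antitone (conj p) := by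
  intro a b hab
  by_contra h
  have h1 := (lt_conj_iff hp hm (conj p a) b).1 (not_le.1 h)
  have h2 := (lt_conj_iff hp hm (conj p a) a).2 (by omega)
  exact lt_irrefl _ h2

lemma conj_eq_zero {p : ℕ → ℕ} (hp : Antitone p) {m : ℕ} (hm : p m = 0) {j : ℕ} :
    conj p j = 0 ↔ p 0 ≤ j := by
  have := lt_conj_iff hp hm 0 j
  omega

lemma conj_conj {p : ℕ → ℕ} (hp : Antitone p) {m : ℕ} (hm : p m = 0) : conj (conj p) = p := by
  funext i
  apply eq_of_forall_lt_iff
  intro j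
  rw [lt_conj_iff (antitone_conj hp hm) ((conj_eq_zero hp hm).2 le_rfl), lt_conj_iff hp hm]

/-- The diagram is finite and the weight is its cardinality. -/
lemma card_cells {p : ℕ → ℕ} (hp : Antitone p) {m : ℕ} (hm : p m = 0) :
    (cells p).Finite ∧ (cells p).ncard = ∑ i ∈ Finset.range m, p i := by
  have h : cells p = (fun s : (_ : ℕ) × ℕ => (s.1, s.2)) ''
      ((Finset.range m).sigma fun i => Finset.range (p i) : Finset ((_ : ℕ) × ℕ)) := by
    ext ⟨i, j⟩
    simp only [cells, Set.mem_ofPred_eq, Set.mem_image, Finset.mem_coe, Finset.mem_sigma,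
      Finset.mem_range, Prod.mk.injEq]
    constructor
    · intro h
      exact ⟨⟨i, j⟩, ⟨lt_of_pos hp hm (Nat.zero_lt_of_lt h), h⟩, rfl, rfl⟩
    · rintro ⟨⟨a, b⟩, ⟨_, h⟩, rfl, rfl⟩
      exact h
  rw [h]
  refine ⟨(Finset.finite_toSet _).image _, ?_⟩
  rw [Set.ncard_image_of_injective _ (by rintro ⟨a, b⟩ ⟨c, d⟩ h; simpa using h), Set.ncard_coe_finset]
  simp

lemma cells_conj {p : ℕ → ℕ} (hp : Antitone p) {m : ℕ} (hm : p m = 0) :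
    cells (conj p) = Prod.swap '' cells p := by
  ext ⟨i, j⟩
  simp [cells, lt_conj_iff hp hm, Prod.swap]

lemma IsPart.conj {k : ℕ} {p : ℕ → ℕ} (hp : IsPart k p) : IsPart k (conj p) := by
  obtain ⟨ha, m, hm, hs⟩ := hp
  have ha' := antitone_conj ha hm
  have h0 := (conj_eq_zero ha hm).2 (le_refl (p 0))
  refine ⟨ha', p 0, h0, ?_⟩
  rw [← (card_cells ha' h0).2, cells_conj ha hm, Set.ncard_image_of_injective _ Prod.swap_injective,
    (card_cells ha hm).2, hs]

/-! ### Partitions as multisets -/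

lemma getD_sum (l : List ℕ) : ∑ i ∈ Finset.range l.length, l.getD i 0 = l.sum := by
  induction l with
  | nil => simp
  | cons a t ih => rw [List.length_cons, Finset.sum_range_succ']; simp [← ih, add_comm]

lemma antitone_getD {l : List ℕ} (hl : l.Pairwise (· ≥ ·)) : Antitone fun i => l.getD i 0 := by
  apply antitone_nat_of_succ_le
  intro i
  rcases lt_or_ge (i + 1) l.length with h | h
  · rw [List.getD_eq_getElem _ _ h, List.getD_eq_getElem _ _ (by omega)]
    exact List.pairwise_iff_getElem.1 hl i (i + 1) (by omega) h (by omega)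
  · rw [List.getD_eq_default _ _ h]; exact Nat.zero_le _

lemma pairwise_sort_reverse (μ : Multiset ℕ) : (μ.sort (· ≤ ·)).reverse.Pairwise (· ≥ ·) := by
  rw [List.pairwise_reverse]
  exact Multiset.pairwise_sort ..

lemma sort_reverse_coe {l : List ℕ} (hl : l.Pairwise (· ≥ ·)) :
    ((l : Multiset ℕ).sort (· ≤ ·)).reverse = l := by
  have hp : ((l : Multiset ℕ).sort (· ≤ ·)).reverse.Perm l :=
    (List.reverse_perm _).trans (Multiset.coe_eq_coe.1 (Multiset.sort_eq ..))
  exact hp.eq_of_pairwise (fun a b _ _ h1 h2 => le_antisymm h2 h1) (pairwise_sort_reverse _) hl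

lemma isPart_nthPart {k : ℕ} (lam : Nat.Partition k) : IsPart k (nthPart lam.parts) := by
  refine ⟨antitone_getD (pairwise_sort_reverse _), (lam.parts.sort (· ≤ ·)).reverse.length,
    List.getD_eq_default _ _ le_rfl, ?_⟩
  unfold nthPart
  rw [getD_sum, List.sum_reverse, ← Multiset.sum_coe, Multiset.sort_eq, lam.parts_sum]

lemma getD_pos_iff {l : List ℕ} (hl : ∀ x ∈ l, 0 < x) {i : ℕ} : 0 < l.getD i 0 ↔ i < l.length := by
  rcases lt_or_ge i l.length with h | h
  · rw [List.getD_eq_getElem _ _ h]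
    exact ⟨fun _ => h, fun _ => hl _ (List.getElem_mem h)⟩
  · rw [List.getD_eq_default _ _ h]
    omega

lemma nthPart_injective {k : ℕ} {lam mu : Nat.Partition k}
    (h : nthPart lam.parts = nthPart mu.parts) : lam = mu := by
  have key : ∀ nu : Nat.Partition k, ∀ x ∈ (nu.parts.sort (· ≤ ·)).reverse, 0 < x := by
    intro nu x hx
    exact nu.parts_pos (by simpa using hx)
  have hlist : (lam.parts.sort (· ≤ ·)).reverse = (mu.parts.sort (· ≤ ·)).reverse := by
    have hpos : ∀ i, i < (lam.parts.sort (· ≤ ·)).reverse.length ↔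
        i < (mu.parts.sort (· ≤ ·)).reverse.length := by
      intro i
      rw [← getD_pos_iff (key lam), ← getD_pos_iff (key mu)]
      exact iff_of_eq (congrArg (0 < ·) (congrFun h i))
    refine List.ext_getElem (eq_of_forall_lt_iff hpos) ?_
    intro i h1 h2
    have := congrFun h i
    unfold nthPart at this
    rwa [List.getD_eq_getElem _ _ h1, List.getD_eq_getElem _ _ h2] at this
  have := congrArg (fun l : List ℕ => (l : Multiset ℕ)) (List.reverse_injective hlist)
  simp only [Multiset.sort_eq] at this
  exact Nat.Partition.ext this

lemma nthPart_surjective {k : ℕ} {p : ℕ → ℕ} (hp : IsPart k p) :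
    ∃ lam : Nat.Partition k, nthPart lam.parts = p := by
  have hex : ∃ m, p m = 0 := by obtain ⟨_, m, hm, _⟩ := hp; exact ⟨m, hm⟩
  set m := Nat.find hex with hmdef
  have hm : p m = 0 := Nat.find_spec hex
  set l := (List.range m).map p with hl
  have hsorted : l.Pairwise (· ≥ ·) := by
    rw [hl, List.pairwise_map]
    exact List.pairwise_lt_range.imp fun h => hp.1 h.le
  have hlen : l.length = m := by simp [hl]
  have hsum : l.sum = k := by
    rw [← hp.sum_eq hm, ← getD_sum, hlen]
    refine Finset.sum_congr rfl fun i hi => ?_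
    rw [List.getD_eq_getElem _ _ (by rw [hlen]; exact Finset.mem_range.1 hi)]
    simp [hl]
  refine ⟨⟨(l : Multiset ℕ), ?_, by simpa using hsum⟩, ?_⟩
  · intro i hi
    simp only [hl, Multiset.mem_coe, List.mem_map, List.mem_range] at hi
    obtain ⟨a, ha, rfl⟩ := hi
    exact Nat.pos_of_ne_zero (Nat.find_min hex ha)
  · funext i
    unfold nthPart
    rw [sort_reverse_coe hsorted]
    rcases lt_or_ge i m with h | h
    · rw [List.getD_eq_getElem _ _ (by rw [hlen]; exact h)]
      simp [hl]
    · rw [List.getD_eq_default _ _ (by rw [hlen]; exact h), zero_of_le hp.1 hm h]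

/-- Standard fillings of a set of cells by `1, …, k`, extended by zero. -/
def SYT (A : Set (ℕ × ℕ)) (k : ℕ) : Set (ℕ × ℕ → ℕ) :=
  {T | (∀ c, c ∉ A → T c = 0) ∧ Set.BijOn T A (Set.Icc 1 k) ∧
    (∀ i j, (i, j + 1) ∈ A → T (i, j) < T (i, j + 1)) ∧
    (∀ i j, (i + 1, j) ∈ A → T (i, j) < T (i + 1, j))}

/-- The number of standard Young tableaux with row lengths `p` and entries `1, …, k`. -/
noncomputable def syt (k : ℕ) (p : ℕ → ℕ) : ℕ := (SYT (cells p) k).ncard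

lemma coe_shapeCells {k : ℕ} (lam : Nat.Partition k) :
    (shapeCells lam.parts : Set (ℕ × ℕ)) = cells (nthPart lam.parts) := by
  ext ⟨i, j⟩
  simp only [shapeCells, cells, Finset.coe_filter, Finset.mem_product, Finset.mem_range,
    Set.mem_ofPred_eq, and_iff_right_iff_imp]
  intro h
  have hi : i < (lam.parts.sort (· ≤ ·)).reverse.length := by
    by_contra h'
    unfold nthPart at h
    rw [List.getD_eq_default _ _ (not_lt.1 h')] at h
    omega
  refine ⟨by simpa using hi, ?_⟩
  have hmem : nthPart lam.parts i ∈ lam.parts := by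
    unfold nthPart
    rw [List.getD_eq_getElem _ _ hi]
    exact (Multiset.mem_sort _).1 (List.mem_reverse.1 (List.getElem_mem hi))
  have := Multiset.le_sum_of_mem hmem
  omega

lemma sytCount_eq {k : ℕ} (lam : Nat.Partition k) :
    sytCount lam.parts = syt k (nthPart lam.parts) := by
  unfold sytCount syt SYT
  rw [← coe_shapeCells, lam.parts_sum]
  simp only [Finset.mem_coe]

/-! ### Counting standard Young tableaux -/

/-- Finiteness and cardinality of a set from those of the fibres of a map. -/
lemma ncard_fiber {α : Type*} (S : Set α) (B : Finset ℕ) (key : α → ℕ)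
    (hkey : ∀ x ∈ S, key x ∈ B) (N : ℕ → ℕ)
    (h : ∀ b ∈ B, {x | x ∈ S ∧ key x = b}.Finite ∧ {x | x ∈ S ∧ key x = b}.ncard = N b) :
    S.Finite ∧ S.ncard = ∑ b ∈ B, N b := by
  have hU : S = ⋃ b ∈ B, {x | x ∈ S ∧ key x = b} := by
    ext x
    simp only [Set.mem_iUnion, Set.mem_ofPred_eq, exists_prop]
    exact ⟨fun hx => ⟨_, hkey x hx, hx, rfl⟩, fun ⟨_, _, hx, _⟩ => hx⟩
  have hfin : S.Finite := by
    rw [hU]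
    exact B.finite_toSet.biUnion fun b hb => (h b hb).1
  refine ⟨hfin, ?_⟩
  rw [Set.ncard_eq_toFinset_card _ hfin,
    Finset.card_eq_sum_card_fiberwise (f := key) (t := B) (fun x hx => hkey x (by simpa using hx))]
  refine Finset.sum_congr rfl fun b hb => ?_
  rw [← (h b hb).2, ← Set.ncard_coe_finset]
  congr 1
  ext x
  simp

lemma le_of_mem_SYT {A : Set (ℕ × ℕ)} {k : ℕ} {T : ℕ × ℕ → ℕ} (hT : T ∈ SYT A k) (c : ℕ × ℕ) :
    T c ≤ k := by
  by_cases hc : c ∈ A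
  · exact (hT.2.1.mapsTo hc).2
  · rw [hT.1 c hc]; exact Nat.zero_le _

/-- Tableaux whose largest entry sits in the corner `c` are the tableaux of the shape without `c`. -/
lemma SYT_corner {A : Set (ℕ × ℕ)} {k : ℕ} {c : ℕ × ℕ} (hc : c ∈ A) (h1 : (c.1, c.2 + 1) ∉ A)
    (h2 : (c.1 + 1, c.2) ∉ A) :
    {T | T ∈ SYT A (k + 1) ∧ T c = k + 1} =
      (fun T => Function.update T c (k + 1)) '' SYT (A \ {c}) k := by
  ext T
  constructor
  · rintro ⟨hT, hTc⟩
    have hle : ∀ x, Function.update T c 0 x ≤ T x := by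
      intro x
      by_cases hx : x = c
      · subst hx; simp
      · simp [hx]
    refine ⟨Function.update T c 0, ⟨?_, ?_, ?_, ?_⟩, ?_⟩
    · intro x hx
      by_cases hxc : x = c
      · subst hxc; simp
      · rw [Function.update_of_ne hxc]
        exact hT.1 x fun h => hx ⟨h, hxc⟩
    · have hcongr : Set.EqOn T (Function.update T c 0) (A \ {c}) := fun x hx => by
        rw [Function.update_of_ne hx.2]
      refine Set.BijOn.congr ⟨?_, ?_, ?_⟩ hcongr
      · intro x hx
        have h3 := hT.2.1.mapsTo hx.1
        have h4 : T x ≠ k + 1 := fun h => hx.2 (hT.2.1.injOn hx.1 hc (h.trans hTc.symm))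
        exact ⟨h3.1, by have := h3.2; omega⟩
      · exact hT.2.1.injOn.mono Set.sdiff_subset
      · intro y hy
        obtain ⟨x, hx, rfl⟩ := hT.2.1.surjOn (show y ∈ Set.Icc 1 (k + 1) from ⟨hy.1, by
          have := hy.2; omega⟩)
        refine ⟨x, ⟨hx, ?_⟩, rfl⟩
        rintro rfl
        have := hy.2
        omega
    · intro i j hij
      rw [Function.update_of_ne hij.2]
      exact (hle _).trans_lt (hT.2.2.1 i j hij.1)
    · intro i j hij
      rw [Function.update_of_ne hij.2]
      exact (hle _).trans_lt (hT.2.2.2 i j hij.1)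
    · simp [← hTc]
  · rintro ⟨S, hS, rfl⟩
    refine ⟨⟨?_, ?_, ?_, ?_⟩, by simp⟩
    · intro x hx
      have hxc : x ≠ c := fun h => hx (h ▸ hc)
      simp only [Function.update_of_ne hxc]
      exact hS.1 x fun h => hx h.1
    · have hcongr : Set.EqOn S (Function.update S c (k + 1)) (A \ {c}) := fun x hx => by
        rw [Function.update_of_ne hx.2]
      have hb := hS.2.1.congr hcongr
      have hb2 := hb.insert (a := c) (by simp)
      rw [Set.insert_sdiff_singleton, Set.insert_eq_of_mem hc] at hb2
      convert hb2 using 1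
      ext y
      simp only [Function.update_self, Set.mem_insert_iff, Set.mem_Icc]
      omega
    · intro i j hij
      beta_reduce
      by_cases hjc : (i, j + 1) = c
      · rw [hjc, Function.update_self, Function.update_of_ne]
        · exact Nat.lt_succ_of_le (le_of_mem_SYT hS _)
        · rw [← hjc]; simp
      · rw [Function.update_of_ne hjc, Function.update_of_ne]
        · exact hS.2.2.1 i j ⟨hij, hjc⟩
        · rintro rfl
          exact h1 hij
    · intro i j hij
      beta_reduce
      by_cases hjc : (i + 1, j) = c
      · rw [hjc, Function.update_self, Function.update_of_ne]
        · exact Nat.lt_succ_of_le (le_of_mem_SYT hS _)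
        · rw [← hjc]; simp
      · rw [Function.update_of_ne hjc, Function.update_of_ne]
        · exact hS.2.2.2 i j ⟨hij, hjc⟩
        · rintro rfl
          exact h2 hij

lemma cells_dec {p : ℕ → ℕ} {b : ℕ} :
    cells (dec p b) = cells p \ {(b, p b - 1)} := by
  ext ⟨i, j⟩
  simp only [cells, dec, Set.mem_ofPred_eq, Set.mem_sdiff, Set.mem_singleton_iff, Prod.mk.injEq,
    not_and]
  split_ifs with h
  · subst h
    simp only [true_imp_iff]
    omega
  · simp [h]

lemma syt_zero : (SYT (cells 0) 0) = {0} := by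
  ext T
  simp only [Set.mem_singleton_iff]
  constructor
  · intro h
    funext c
    exact h.1 c (by simp [cells])
  · rintro rfl
    refine ⟨by simp, ?_, ?_, ?_⟩
    · have h1 : cells 0 = ∅ := by ext; simp [cells]
      have h2 : Set.Icc 1 0 = (∅ : Set ℕ) := by simp
      rw [h1, h2]
      exact Set.bijOn_empty _
    · intro i j h; simp [cells] at h
    · intro i j h; simp [cells] at h

/-- The largest entry of a tableau sits at the end of a row `b` whose last cell is a corner. -/
lemma SYT_max {p : ℕ → ℕ} {k : ℕ} {T : ℕ × ℕ → ℕ}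
    (hT : T ∈ SYT (cells p) (k + 1)) {c : ℕ × ℕ} (hc : c ∈ cells p) (h : T c = k + 1) :
    c.2 = p c.1 - 1 ∧ p (c.1 + 1) < p c.1 := by
  obtain ⟨i, j⟩ := c
  simp only [cells, Set.mem_ofPred_eq] at hc ⊢
  have h1 : ¬ j + 1 < p i := fun h' => by
    have h3 := hT.2.2.1 i j h'
    have h4 := le_of_mem_SYT hT (i, j + 1)
    omega
  have h2 : ¬ j < p (i + 1) := fun h' => by
    have h3 := hT.2.2.2 i j h'
    have h4 := le_of_mem_SYT hT (i + 1, j)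
    omega
  omega

lemma SYT_finite_and_rec : ∀ {k : ℕ} {p : ℕ → ℕ}, IsPart k p → (SYT (cells p) k).Finite ∧
    ∀ k' m, k = k' + 1 → p m = 0 →
      syt k p = ∑ b ∈ Finset.range m, if p (b + 1) < p b then syt k' (dec p b) else 0 := by
  intro k
  induction k with
  | zero =>
    intro p hp
    rw [isPart_zero_iff] at hp
    subst hp
    rw [syt_zero]
    exact ⟨Set.finite_singleton _, fun k' m h => by omega⟩
  | succ k ih =>
    intro p hp
    suffices h : ∀ m, p m = 0 → (SYT (cells p) (k + 1)).Finite ∧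
        (SYT (cells p) (k + 1)).ncard =
          ∑ b ∈ Finset.range m, if p (b + 1) < p b then syt k (dec p b) else 0 by
      obtain ⟨m, hm, _⟩ := hp.2
      refine ⟨(h m hm).1, fun k' m hk hm => ?_⟩
      obtain rfl : k = k' := by omega
      exact (h m hm).2
    intro m hm
    have hex : ∀ T ∈ SYT (cells p) (k + 1), ∃ c ∈ cells p, T c = k + 1 := fun T hT =>
      hT.2.1.surjOn (show k + 1 ∈ Set.Icc 1 (k + 1) from ⟨by omega, le_rfl⟩)
    set key : (ℕ × ℕ → ℕ) → ℕ := fun T => (Function.invFunOn T (cells p) (k + 1)).1 with hkey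
    have hkey' : ∀ T ∈ SYT (cells p) (k + 1), p (key T + 1) < p (key T) ∧
        T (key T, p (key T) - 1) = k + 1 := by
      intro T hT
      have h1 := Function.invFunOn_mem (hex T hT)
      have h2 := Function.invFunOn_eq (hex T hT)
      have h3 := SYT_max hT h1 h2
      refine ⟨h3.2, ?_⟩
      rw [← h3.1]
      exact h2
    refine ncard_fiber _ _ key ?_ _ ?_
    · intro T hT
      exact Finset.mem_range.2 (lt_of_pos hp.1 hm (Nat.zero_lt_of_lt (hkey' T hT).1))
    · intro b _
      split_ifs with hb
      · have hS : {T | T ∈ SYT (cells p) (k + 1) ∧ key T = b} =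
            {T | T ∈ SYT (cells p) (k + 1) ∧ T (b, p b - 1) = k + 1} := by
          ext T
          simp only [Set.mem_ofPred_eq, and_congr_right_iff]
          intro hT
          constructor
          · rintro rfl
            exact (hkey' T hT).2
          · intro h
            have h1 := Function.invFunOn_mem (hex T hT)
            have h2 := Function.invFunOn_eq (hex T hT)
            have h3 : (b, p b - 1) ∈ cells p := by simp only [cells, Set.mem_ofPred_eq]; omega
            have := hT.2.1.injOn h1 h3 (h2.trans h.symm)
            rw [hkey]
            simp only [this]
        have hinj : Set.InjOn (fun T : ℕ × ℕ → ℕ => Function.update T (b, p b - 1) (k + 1))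
            (SYT (cells p \ {(b, p b - 1)}) k) := by
          intro S hS S' hS' h
          funext x
          by_cases hx : x = (b, p b - 1)
          · rw [hS.1 x (fun h => h.2 hx), hS'.1 x (fun h => h.2 hx)]
          · have := congrFun h x
            simpa [Function.update_of_ne hx] using this
        rw [hS, SYT_corner (by simp only [cells, Set.mem_ofPred_eq]; omega)
          (by simp only [cells, Set.mem_ofPred_eq]; omega)
          (by simp only [cells, Set.mem_ofPred_eq]; omega), hinj.ncard_image]
        have := (ih (hp.dec hb)).1
        rw [cells_dec] at this
        refine ⟨this.image _, ?_⟩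
        rw [syt, cells_dec]
      · have hS : {T | T ∈ SYT (cells p) (k + 1) ∧ key T = b} = ∅ := by
          ext T
          simp only [Set.mem_ofPred_eq, Set.mem_empty_iff_false, iff_false, not_and]
          rintro hT rfl
          exact hb (hkey' T hT).1
        rw [hS]
        simp

/-- Branching rule: delete the cell holding the largest entry. -/
lemma syt_succ {k : ℕ} {p : ℕ → ℕ} (hp : IsPart (k + 1) p) {m : ℕ} (hm : p m = 0) :
    syt (k + 1) p = ∑ b ∈ Finset.range m, if p (b + 1) < p b then syt k (dec p b) else 0 :=
  (SYT_finite_and_rec hp).2 k m rfl hm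

lemma SYT_swap {A : Set (ℕ × ℕ)} {k : ℕ} {T : ℕ × ℕ → ℕ} (hT : T ∈ SYT A k) :
    T ∘ Prod.swap ∈ SYT (Prod.swap '' A) k := by
  refine ⟨?_, ?_, ?_, ?_⟩
  · intro c hc
    exact hT.1 _ fun h => hc ⟨_, h, Prod.swap_swap c⟩
  · refine hT.2.1.comp ⟨?_, Prod.swap_injective.injOn, ?_⟩
    · rintro _ ⟨c, hc, rfl⟩
      simpa using hc
    · intro c hc
      exact ⟨c.swap, ⟨c, hc, rfl⟩, Prod.swap_swap c⟩
  · rintro i j ⟨⟨a, b⟩, hc, h⟩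
    simp only [Prod.swap_prod_mk, Prod.mk.injEq] at h
    obtain ⟨rfl, rfl⟩ := h
    exact hT.2.2.2 _ _ hc
  · rintro i j ⟨⟨a, b⟩, hc, h⟩
    simp only [Prod.swap_prod_mk, Prod.mk.injEq] at h
    obtain ⟨rfl, rfl⟩ := h
    exact hT.2.2.1 _ _ hc

/-- Transposing tableaux. -/
lemma syt_conj {k : ℕ} {p : ℕ → ℕ} (hp : IsPart k p) : syt k (conj p) = syt k p := by
  obtain ⟨ha, m, hm, _⟩ := hp
  unfold syt
  rw [cells_conj ha hm]
  have h : SYT (Prod.swap '' cells p) k = (fun T => T ∘ Prod.swap) '' SYT (cells p) k := by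
    ext T
    constructor
    · intro hT
      refine ⟨T ∘ Prod.swap, ?_, by funext; simp⟩
      have := SYT_swap hT
      rwa [← Set.image_comp, Prod.swap_swap_eq, Set.image_id] at this
    · rintro ⟨S, hS, rfl⟩
      exact SYT_swap hS
  rw [h, Set.ncard_image_of_injective]
  intro S S' h
  funext c
  have := congrFun h c.swap
  simpa using this

/-! ### Lattice words and row insertion -/

/-- The content of a word. -/
def cnt (w : List ℕ) : ℕ → ℕ := fun i => w.count i

/-- Add one cell to row `b`. -/
def inc (p : ℕ → ℕ) (b : ℕ) : ℕ → ℕ := fun i => if i = b then p i + 1 else p i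

/-- Lattice (Yamanouchi) words, the most recent letter at the head: the content of every tail is
weakly decreasing. Such a word records a chain of partitions from the empty one, each letter being
the row of the cell added at that step; equivalently, it records a standard Young tableau. -/
def Yam : List ℕ → Prop
  | [] => True
  | a :: w => Yam w ∧ ∀ i, cnt (a :: w) (i + 1) ≤ cnt (a :: w) i

/-- One row of a growth diagram. A lattice word `w` is the chain of partitions along the lower
boundary of the row; the row has one more column, inserted after the first `c` ones (the last `c`
entries of the list), and that column holds the cross. The result consists of the word along the
upper boundary and of the row of the cell by which the upper right partition exceeds the lower right
one. The three branches are the local rules: to the right of the cross, a bumped cell moves down by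
one row, and a cell that is not bumped stays. To the left of the cross nothing changes. -/
def ins (c : ℕ) : List ℕ → List ℕ × ℕ
  | [] => ([0], 0)
  | a :: t =>
    if c = t.length + 1 then (0 :: a :: t, 0)
    else if a = (ins c t).2 then ((a + 1) :: (ins c t).1, a + 1)
    else (a :: (ins c t).1, (ins c t).2)

/-- The number of zeros among the first `j` columns, i.e. the first row length of the `j`-th
partition of the chain; for `j` beyond the length of the word all letters are used. -/
def zeros : List ℕ → ℕ → ℕ
  | [], _ => 0
  | a :: t, j => if j ≤ t.length then zeros t j else (a :: t).count 0

lemma cnt_cons (a : ℕ) (w : List ℕ) : cnt (a :: w) = inc (cnt w) a := by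
  funext i
  by_cases h : i = a
  · subst h; simp [cnt, inc]
  · simp [cnt, inc, h, List.count_cons_of_ne (Ne.symm h)]

lemma Yam.le {w : List ℕ} (h : Yam w) (i : ℕ) : cnt w (i + 1) ≤ cnt w i := by
  cases w with
  | nil => simp [cnt]
  | cons a t => exact h.2 i

lemma Yam.antitone {w : List ℕ} (h : Yam w) : Antitone (cnt w) := antitone_nat_of_succ_le h.le

lemma inc_dec {p : ℕ → ℕ} {b : ℕ} (h : 0 < p b) : inc (dec p b) b = p := by
  funext i
  unfold inc dec
  split_ifs with h1
  · subst h1; omega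
  · rfl

lemma dec_inc (p : ℕ → ℕ) (b : ℕ) : dec (inc p b) b = p := by
  funext i
  simp only [inc, dec]
  split_ifs <;> omega

lemma sum_inc {p : ℕ → ℕ} {b m : ℕ} (h : b < m) :
    ∑ i ∈ Finset.range m, inc p b i = ∑ i ∈ Finset.range m, p i + 1 := by
  rw [← Finset.add_sum_erase _ _ (Finset.mem_range.2 h),
    ← Finset.add_sum_erase _ p (Finset.mem_range.2 h)]
  have : ∑ x ∈ (Finset.range m).erase b, inc p b x = ∑ x ∈ (Finset.range m).erase b, p x :=
    Finset.sum_congr rfl fun x hx => by simp [inc, (Finset.mem_erase.1 hx).1]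
  rw [this]
  simp only [inc, if_true]
  omega

lemma Yam.isPart {w : List ℕ} (h : Yam w) : IsPart w.length (cnt w) := by
  refine ⟨h.antitone, ?_⟩
  induction w with
  | nil => exact ⟨0, rfl, by simp⟩
  | cons a t ih =>
    obtain ⟨m, hm, hs⟩ := ih h.1
    refine ⟨max m (a + 1), ?_, ?_⟩
    · rw [cnt_cons, inc, if_neg (by omega)]
      exact zero_of_le h.1.antitone hm (by omega)
    · rw [cnt_cons, sum_inc (by omega), sum_range_eq_of_zero h.1.antitone hm (by omega), hs]
      simp

/-- Lattice words with prescribed content. -/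
def Words (k : ℕ) (p : ℕ → ℕ) : Set (List ℕ) := {w | w.length = k ∧ Yam w ∧ cnt w = p}

/-- Lattice words and standard tableaux satisfy the same branching rule. -/
lemma ncard_Words : ∀ {k : ℕ} {p : ℕ → ℕ}, IsPart k p →
    (Words k p).Finite ∧ (Words k p).ncard = syt k p := by
  intro k
  induction k with
  | zero =>
    intro p hp
    rw [isPart_zero_iff] at hp
    subst hp
    have : Words 0 0 = {[]} := by
      ext w
      simp only [Words, Set.mem_ofPred_eq, Set.mem_singleton_iff, List.length_eq_zero_iff]
      exact ⟨fun h => h.1, by rintro rfl; exact ⟨rfl, trivial, by funext; simp [cnt]⟩⟩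
    rw [this, syt, syt_zero]
    simp
  | succ k ih =>
    intro p hp
    obtain ⟨m, hm, _⟩ := id hp.2
    rw [syt_succ hp hm]
    have hhead : ∀ w ∈ Words (k + 1) p, ∃ a t, w = a :: t ∧ p (a + 1) < p a ∧
        t ∈ Words k (dec p a) := by
      rintro w ⟨hl, hy, hc⟩
      cases w with
      | nil => simp at hl
      | cons a t =>
        refine ⟨a, t, rfl, ?_, by simpa using hl, hy.1, ?_⟩
        · have h1 := hy.1.le a
          rw [← hc, cnt_cons]
          simp only [inc]
          split_ifs <;> omega
        · rw [← hc, cnt_cons, dec_inc]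
    refine ncard_fiber _ _ (fun w => w.headD 0) ?_ _ ?_
    · intro w hw
      obtain ⟨a, t, rfl, h, _⟩ := hhead w hw
      exact Finset.mem_range.2 (lt_of_pos hp.1 hm (Nat.zero_lt_of_lt h))
    · intro b _
      split_ifs with hb
      · have : {w | w ∈ Words (k + 1) p ∧ w.headD 0 = b} = (List.cons b) '' Words k (dec p b) := by
          ext w
          constructor
          · rintro ⟨hw, h⟩
            obtain ⟨a, t, rfl, _, ht⟩ := hhead w hw
            obtain rfl : a = b := by simpa using h
            exact ⟨t, ht, rfl⟩
          · rintro ⟨t, ⟨hl, hy, hc⟩, rfl⟩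
            have hcc : cnt (b :: t) = p := by rw [cnt_cons, hc, inc_dec (by omega)]
            refine ⟨⟨by simp [hl], ⟨hy, ?_⟩, hcc⟩, by simp⟩
            rw [hcc]
            exact fun i => hp.1 (Nat.le_succ i)
        rw [this, Set.ncard_image_of_injective _ (List.cons_injective)]
        exact ⟨(ih (hp.dec hb)).1.image _, (ih (hp.dec hb)).2⟩
      · have : {w | w ∈ Words (k + 1) p ∧ w.headD 0 = b} = ∅ := by
          ext w
          simp only [Set.mem_ofPred_eq, Set.mem_empty_iff_false, iff_false, not_and]
          intro hw h
          obtain ⟨a, t, rfl, hlt, _⟩ := hhead w hw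
          obtain rfl : a = b := by simpa using h
          exact hb hlt
        rw [this]
        simp

lemma ins_length_self (w : List ℕ) : ins w.length w = (0 :: w, 0) := by
  cases w <;> simp [ins]

lemma length_ins (c : ℕ) (w : List ℕ) : (ins c w).1.length = w.length + 1 := by
  induction w with
  | nil => simp [ins]
  | cons a t ih =>
    unfold ins
    split_ifs <;> simp [ih]

lemma cnt_ins (c : ℕ) (w : List ℕ) : cnt (ins c w).1 = inc (cnt w) (ins c w).2 := by
  induction w with
  | nil => simp [ins, cnt_cons]
  | cons a t ih =>
    unfold ins
    split_ifs with h1 h2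
    · rw [cnt_cons]
    · simp only [cnt_cons, ih, ← h2]
    · simp only [cnt_cons, ih]
      funext i
      unfold inc
      split_ifs <;> omega

lemma Yam.ins {w : List ℕ} (h : Yam w) (c : ℕ) : Yam (ins c w).1 := by
  induction w with
  | nil => exact ⟨trivial, fun i => by simp [cnt, List.count_cons]⟩
  | cons a t ih =>
    have h1 := ih h.1
    have h2 := h.1.antitone
    have h3 := cnt_ins c t
    unfold Gessel.ins
    split_ifs with hc hb
    · refine ⟨h, fun i => ?_⟩
      have := h.le i
      rw [cnt_cons 0]
      simp only [inc]
      split_ifs <;> first | omega | contradiction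
    · refine ⟨h1, fun i => ?_⟩
      have h4 := h1.le i
      have h5 := h.1.le i
      simp only [cnt_cons, h3, inc] at h4 ⊢
      split_ifs at h4 ⊢ <;> subst_vars <;> omega
    · refine ⟨h1, fun i => ?_⟩
      have h4 := h1.le i
      have h5 := h.le i
      have h6 := h.1.le i
      simp only [cnt_cons, h3, inc] at h4 h5 ⊢
      split_ifs at h4 h5 ⊢ <;> omega

/-- The local rules are reversible. -/
lemma ins_injective {w : List ℕ} : ∀ {c c' : ℕ} {w' : List ℕ}, c ≤ w.length → c' ≤ w'.length →
    ins c w = ins c' w' → c = c' ∧ w = w' := by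
  induction w with
  | nil =>
    intro c c' w' hc hc' h
    have hl := congrArg (fun x : List ℕ × ℕ => x.1.length) h
    simp only [length_ins] at hl
    have hw' : w' = [] := List.length_eq_zero_iff.1 (by simpa using hl.symm)
    subst hw'
    simp at hc hc'
    exact ⟨by omega, rfl⟩
  | cons a t ih =>
    intro c c' w' hc hc' h
    cases w' with
    | nil =>
      have hl := congrArg (fun x : List ℕ × ℕ => x.1.length) h
      simp [length_ins] at hl
    | cons a' t' =>
      simp only [List.length_cons] at hc hc'
      have key : ∀ {c c' : ℕ} {t t' : List ℕ} {a a' : ℕ}, c = t.length + 1 → c' ≠ t'.length + 1 →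
          ins c (a :: t) ≠ ins c' (a' :: t') := by
        intro c c' t t' a a' h1 h2 h
        rw [ins, if_pos h1, ins, if_neg h2] at h
        split_ifs at h with h3
        · simp at h
        · simp only [Prod.mk.injEq, List.cons.injEq] at h
          omega
      by_cases h1 : c = t.length + 1
      · by_cases h2 : c' = t'.length + 1
        · rw [ins, ins, if_pos h1, if_pos h2] at h
          simp only [Prod.mk.injEq, List.cons.injEq, true_and, and_true] at h
          obtain ⟨rfl, rfl⟩ := h
          exact ⟨by omega, rfl⟩
        · exact absurd h (key h1 h2)
      · by_cases h2 : c' = t'.length + 1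
        · exact absurd h.symm (key h2 h1)
        · rw [ins, ins, if_neg h1, if_neg h2] at h
          have fin : a = a' ∧ ins c t = ins c' t' := by
            split_ifs at h with h3 h4 h4 <;>
              simp only [Prod.mk.injEq, List.cons.injEq] at h
            · exact ⟨by omega, Prod.ext h.1.2 (by omega)⟩
            · omega
            · omega
            · exact ⟨h.1.1, Prod.ext h.1.2 h.2⟩
          obtain ⟨rfl, h5⟩ := fin
          obtain ⟨rfl, rfl⟩ := ih (by omega) (by omega) h5
          exact ⟨rfl, rfl⟩

/-- A pair `(w', b)` is a result of insertion as soon as row `b` of the content of `w'` ends in a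
corner. -/
lemma ins_surjective {w' : List ℕ} (hw' : Yam w') : ∀ {b : ℕ}, cnt w' (b + 1) < cnt w' b →
    ∃ c w, c ≤ w.length ∧ Yam w ∧ ins c w = (w', b) := by
  induction w' with
  | nil => intro b h; simp [cnt] at h
  | cons x t' ih =>
    intro b hb
    by_cases hx : x = b
    · subst hx
      cases x with
      | zero => exact ⟨t'.length, t', le_rfl, hw'.1, ins_length_self t'⟩
      | succ y =>
        have h1 : cnt t' (y + 1) < cnt t' y := by
          have := hw'.le y
          rw [cnt_cons, inc, inc] at this
          simpa using this
        obtain ⟨c, w, hc, hw, h⟩ := ih hw'.1 h1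
        have h3 := cnt_ins c w
        rw [h] at h3
        refine ⟨c, y :: w, by simp; omega, ⟨hw, ?_⟩, ?_⟩
        · rw [cnt_cons, ← h3]
          exact hw'.1.le
        · rw [ins, if_neg (by omega), h, if_pos rfl]
    · have h1 : cnt t' (b + 1) < cnt t' b := by
        rw [cnt_cons, inc, inc] at hb
        split_ifs at hb <;> omega
      obtain ⟨c, w, hc, hw, h⟩ := ih hw'.1 h1
      have h3 := cnt_ins c w
      rw [h] at h3
      refine ⟨c, x :: w, by simp; omega, ⟨hw, fun i => ?_⟩, ?_⟩
      · have h4 := hw.le i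
        have h5 := hw'.le i
        simp only [cnt_cons, h3, inc] at h5 hb ⊢
        split_ifs at h5 hb ⊢ <;> subst_vars <;> omega
      · rw [ins, if_neg (by omega), h, if_neg hx]

lemma zeros_length (w : List ℕ) : zeros w w.length = cnt w 0 := by
  cases w with
  | nil => simp [zeros, cnt]
  | cons a t => simp [zeros, cnt]

lemma zeros_le (w : List ℕ) (j : ℕ) : zeros w j ≤ cnt w 0 := by
  induction w with
  | nil => simp [zeros]
  | cons a t ih =>
    rw [zeros]
    split_ifs
    · refine ih.trans ?_
      rw [cnt_cons, inc]
      split_ifs <;> omega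
    · exact le_rfl

lemma zeros_cons (a : ℕ) (t : List ℕ) (j : ℕ) :
    zeros (a :: t) j = if j ≤ t.length then zeros t j else cnt (a :: t) 0 := rfl

/-- The first row of the growth diagram obeys the recursion of longest increasing subsequences
under insertion of a new maximum. -/
lemma zeros_ins {w : List ℕ} : ∀ {c j : ℕ}, c ≤ w.length → j ≤ w.length + 1 →
    zeros (ins c w).1 j = if j ≤ c then zeros w j else max (zeros w (j - 1)) (zeros w c + 1) := by
  induction w with
  | nil =>
    intro c j hc hj
    simp only [List.length_nil, nonpos_iff_eq_zero, zero_add] at hc hj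
    subst hc
    interval_cases j <;> simp [ins, zeros]
  | cons a t ih =>
    intro c j hc hj
    simp only [List.length_cons] at hc hj
    by_cases h : c = t.length + 1
    · rw [ins, if_pos h]
      rw [zeros_cons]
      simp only [List.length_cons]
      by_cases hj' : j ≤ t.length + 1
      · rw [if_pos hj', if_pos (by omega)]
      · rw [if_neg hj', if_neg (by omega)]
        have h1 : j - 1 = (a :: t).length := by simp; omega
        have h2 : c = (a :: t).length := by simp; omega
        rw [h1, h2, zeros_length, cnt_cons 0]
        simp [inc]
    · have h1 := cnt_ins c t
      have h2 := length_ins c t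
      have h3 := congrFun h1 0
      have hz := zeros_le t c
      have hzc : zeros (a :: t) c = zeros t c := by rw [zeros_cons, if_pos (by omega)]
      have main : ∀ x, (x = a ∨ (a = (ins c t).2 ∧ x = a + 1)) → (x = a → a ≠ (ins c t).2) →
          zeros (x :: (ins c t).1) j =
          if j ≤ c then zeros (a :: t) j else max (zeros (a :: t) (j - 1)) (zeros (a :: t) c + 1) := by
        intro x hx hx'
        rw [hzc, zeros_cons, h2]
        by_cases hj' : j ≤ t.length + 1
        · rw [if_pos hj', ih (by omega) hj', zeros_cons, zeros_cons, if_pos (by omega : j - 1 ≤ _)]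
          split_ifs <;> first | rfl | omega
        · rw [if_neg hj', if_neg (by omega), zeros_cons, if_neg (by omega)]
          have h4 := ih (c := c) (j := t.length + 1) (by omega) le_rfl
          rw [if_neg (by omega), Nat.add_sub_cancel, zeros_length, ← h2, zeros_length] at h4
          simp only [cnt_cons, inc] at h3 ⊢
          split_ifs at h3 ⊢ <;> omega
      rw [ins, if_neg h]
      by_cases hb : a = (ins c t).2
      · rw [if_pos hb]
        exact main (a + 1) (Or.inr ⟨hb, rfl⟩) (by omega)
      · rw [if_neg hb]
        exact main a (Or.inl rfl) (fun _ => hb)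

/-! ### Permutations and longest increasing subsequences -/

/-- Insert a new maximal value at position `c`. -/
def insMax {k : ℕ} (c : Fin (k + 1)) (σ : Equiv.Perm (Fin k)) : Equiv.Perm (Fin (k + 1)) :=
  (finSuccEquiv' c).trans ((Equiv.optionCongr σ).trans (finSuccEquiv' (Fin.last k)).symm)

@[simp] lemma insMax_self {k : ℕ} (c : Fin (k + 1)) (σ : Equiv.Perm (Fin k)) :
    insMax c σ c = Fin.last k := by
  simp [insMax]

@[simp] lemma insMax_succAbove {k : ℕ} (c : Fin (k + 1)) (σ : Equiv.Perm (Fin k)) (i : Fin k) :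
    insMax c σ (c.succAbove i) = (σ i).castSucc := by
  simp [insMax]

lemma insMax_bijective (k : ℕ) :
    Function.Bijective fun x : Fin (k + 1) × Equiv.Perm (Fin k) => insMax x.1 x.2 := by
  rw [Fintype.bijective_iff_injective_and_card]
  constructor
  · rintro ⟨c, σ⟩ ⟨c', σ'⟩ h
    simp only at h
    obtain rfl : c = c' := by
      apply (insMax c' σ').injective
      rw [← h, insMax_self, h, insMax_self]
    refine Prod.ext rfl (Equiv.ext fun i => ?_)
    have := congrArg (fun π : Equiv.Perm _ => π (c.succAbove i)) h
    simpa using this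
  · simp [Fintype.card_perm, Nat.factorial_succ]

/-- Splitting a permutation into the position of its maximal value and the remaining pattern. -/
noncomputable def split (k : ℕ) : Fin (k + 1) × Equiv.Perm (Fin k) ≃ Equiv.Perm (Fin (k + 1)) :=
  Equiv.ofBijective _ (insMax_bijective k)

/-- The top boundary of the growth diagram of a permutation, as a lattice word: the values
`1, 2, …` are inserted one by one. It encodes one of the two tableaux
attached to the permutation by the Robinson–Schensted correspondence. -/
noncomputable def word : (k : ℕ) → Equiv.Perm (Fin k) → List ℕ
  | 0, _ => []
  | k + 1, π => (ins ((split k).symm π).1 (word k ((split k).symm π).2)).1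

lemma split_symm_insMax {k : ℕ} (c : Fin (k + 1)) (σ : Equiv.Perm (Fin k)) :
    (split k).symm (insMax c σ) = (c, σ) :=
  (split k).symm_apply_apply (c, σ)

lemma word_insMax {k : ℕ} (c : Fin (k + 1)) (σ : Equiv.Perm (Fin k)) :
    word (k + 1) (insMax c σ) = (ins c (word k σ)).1 := by
  rw [word, split_symm_insMax]

lemma exists_insMax {k : ℕ} (π : Equiv.Perm (Fin (k + 1))) : ∃ c σ, insMax c σ = π :=
  ⟨_, _, (split k).apply_symm_apply π⟩

lemma word_spec : ∀ {k : ℕ} (π : Equiv.Perm (Fin k)), Yam (word k π) ∧ (word k π).length = k := by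
  intro k
  induction k with
  | zero => intro π; exact ⟨trivial, rfl⟩
  | succ k ih =>
    intro π
    obtain ⟨c, σ, rfl⟩ := exists_insMax π
    rw [word_insMax]
    exact ⟨(ih σ).1.ins _, by rw [length_ins, (ih σ).2]⟩

/-- The permutations with a given word correspond to standard tableaux of its content (the other
tableau of the Robinson–Schensted pair). -/
lemma ncard_word : ∀ {k : ℕ} {w : List ℕ}, Yam w → w.length = k →
    {π : Equiv.Perm (Fin k) | word k π = w}.ncard = syt k (cnt w) := by
  intro k
  induction k with
  | zero =>
    intro w hw hl
    obtain rfl := List.length_eq_zero_iff.1 hl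
    have h1 : cnt [] = 0 := by funext; simp [cnt]
    rw [syt, h1, syt_zero]
    simp [word]
  | succ k ih =>
    intro w hw hl
    have hp := hw.isPart
    rw [hl] at hp
    obtain ⟨m, hm, _⟩ := id hp.2
    rw [syt_succ hp hm]
    have hkey : ∀ (c : Fin (k + 1)) (σ : Equiv.Perm (Fin k)), word (k + 1) (insMax c σ) = w →
        cnt w ((ins c (word k σ)).2 + 1) < cnt w (ins c (word k σ)).2 := by
      intro c σ h
      rw [word_insMax] at h
      rw [← h, cnt_ins]
      have := (word_spec σ).1.le (ins c (word k σ)).2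
      simp only [inc]
      split_ifs <;> omega
    refine (ncard_fiber _ _
      (fun π => (ins ((split k).symm π).1 (word k ((split k).symm π).2)).2) ?_ _ ?_).2
    · intro π hπ
      obtain ⟨c, σ, rfl⟩ := exists_insMax π
      simp only [split_symm_insMax]
      exact Finset.mem_range.2 (lt_of_pos hw.antitone hm (Nat.zero_lt_of_lt (hkey c σ hπ)))
    · intro b _
      refine ⟨Set.toFinite _, ?_⟩
      split_ifs with hb
      · obtain ⟨c, v, hc, hv, h⟩ := ins_surjective hw hb
        have hlv : v.length = k := by
          have := length_ins c v
          rw [h] at this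
          simp only at this
          omega
        have hset : {π | π ∈ {π : Equiv.Perm (Fin (k + 1)) | word (k + 1) π = w} ∧
            (ins ((split k).symm π).1 (word k ((split k).symm π).2)).2 = b} =
            insMax (⟨c, by omega⟩ : Fin (k + 1)) '' {σ | word k σ = v} := by
          ext π
          obtain ⟨c', σ, rfl⟩ := exists_insMax π
          simp only [Set.mem_ofPred_eq, split_symm_insMax, word_insMax, Set.mem_image]
          constructor
          · rintro ⟨h1, h2⟩
            have h3 : ins c' (word k σ) = ins c v := by
              rw [h]; exact Prod.ext h1 h2
            obtain ⟨h4, h5⟩ := ins_injective (by rw [(word_spec σ).2]; omega) hc h3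
            refine ⟨σ, h5, ?_⟩
            congr 1
            exact Fin.ext h4.symm
          · rintro ⟨τ, hτ, h1⟩
            have h2 := congrArg (split k).symm h1
            rw [split_symm_insMax, split_symm_insMax] at h2
            obtain ⟨rfl, rfl⟩ := Prod.mk.inj h2
            rw [hτ]
            simp [h]
        have hdec : dec (cnt w) b = cnt v := by
          have := cnt_ins c v
          rw [h] at this
          rw [this, dec_inc]
        rw [hset, Set.ncard_image_of_injective, ih hv hlv, hdec]
        intro σ σ' h
        have h2 := congrArg (split k).symm h
        rw [split_symm_insMax, split_symm_insMax] at h2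
        exact (Prod.mk.inj h2).2
      · have hset : {π | π ∈ {π : Equiv.Perm (Fin (k + 1)) | word (k + 1) π = w} ∧
            (ins ((split k).symm π).1 (word k ((split k).symm π).2)).2 = b} = ∅ := by
          ext π
          obtain ⟨c', σ, rfl⟩ := exists_insMax π
          simp only [Set.mem_ofPred_eq, split_symm_insMax, Set.mem_empty_iff_false, iff_false,
            not_and]
          rintro h1 rfl
          exact hb (hkey c' σ h1)
        rw [hset]
        simp

/-- `π` has an increasing subsequence of length `m` among its first `j` positions. -/
def HasInc {k : ℕ} (π : Equiv.Perm (Fin k)) (j m : ℕ) : Prop :=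
  ∃ s : Finset (Fin k), (∀ i ∈ s, i.val < j) ∧ s.card = m ∧
    StrictMonoOn (fun i => π i) (s : Set (Fin k))

lemma val_succAbove {k : ℕ} (c : Fin (k + 1)) (i : Fin k) :
    (c.succAbove i).val = if i.val < c.val then i.val else i.val + 1 := by
  unfold Fin.succAbove
  simp only [Fin.lt_def, Fin.val_castSucc]
  split_ifs <;> simp

lemma strictMonoOn_map {k : ℕ} (c : Fin (k + 1)) (σ : Equiv.Perm (Fin k)) {t : Finset (Fin k)} :
    StrictMonoOn (fun i => insMax c σ i) (t.map c.succAboveEmb : Set (Fin (k + 1))) ↔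
      StrictMonoOn (fun i => σ i) (t : Set (Fin k)) := by
  constructor
  · intro h i hi j hj hij
    have := h (a := c.succAbove i) (by simpa using hi) (b := c.succAbove j) (by simpa using hj)
      (by simpa using hij)
    simpa using this
  · rintro h a ha b hb hab
    simp only [Finset.coe_map, Fin.coe_succAboveEmb, Set.mem_image, Finset.mem_coe] at ha hb
    obtain ⟨i, hi, rfl⟩ := ha
    obtain ⟨j, hj, rfl⟩ := hb
    have := h hi hj (by simpa using hab)
    simpa using this

lemma exists_map_eq {k : ℕ} {c : Fin (k + 1)} {s : Finset (Fin (k + 1))} (hc : c ∉ s) :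
    ∃ t : Finset (Fin k), t.map c.succAboveEmb = s := by
  refine ⟨Finset.univ.filter fun i => c.succAbove i ∈ s, ?_⟩
  ext a
  simp only [Finset.mem_map, Finset.mem_filter, Finset.mem_univ, true_and, Fin.coe_succAboveEmb]
  constructor
  · rintro ⟨i, hi, rfl⟩; exact hi
  · intro ha
    obtain ⟨i, rfl⟩ := Fin.exists_succAbove_eq (y := c) (x := a) (by rintro rfl; exact hc ha)
    exact ⟨i, ha, rfl⟩

/-- An increasing subsequence either avoids the maximal value, or ends in it. -/
lemma hasInc_insMax {k : ℕ} (c : Fin (k + 1)) (σ : Equiv.Perm (Fin k)) (j m : ℕ) :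
    HasInc (insMax c σ) j m ↔
      if j ≤ c.val then HasInc σ j m
      else HasInc σ (j - 1) m ∨ ∃ m', m = m' + 1 ∧ HasInc σ c.val m' := by
  constructor
  · rintro ⟨s, hs, hcard, hmono⟩
    by_cases hc : c ∈ s
    · rw [if_neg (by have := hs c hc; omega)]
      right
      have hlt : ∀ i ∈ s.erase c, i.val < c.val := by
        intro i hi
        obtain ⟨hne, hi⟩ := Finset.mem_erase.1 hi
        rcases lt_trichotomy i c with h | h | h
        · exact h
        · exact absurd h hne
        · have := hmono hc hi h
          simp only [insMax_self] at this
          exact absurd this (not_lt.2 (Fin.le_last _))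
      obtain ⟨t, ht⟩ := exists_map_eq (Finset.notMem_erase c s)
      refine ⟨(s.erase c).card, ?_, t, ?_, ?_, ?_⟩
      · rw [Finset.card_erase_add_one hc, hcard]
      · intro i hi
        have := hlt (c.succAbove i) (by rw [← ht]; simpa using hi)
        rw [val_succAbove] at this
        split_ifs at this <;> omega
      · rw [← ht, Finset.card_map]
      · rw [← strictMonoOn_map c σ, ht]
        exact hmono.mono (by simp)
    · obtain ⟨t, rfl⟩ := exists_map_eq hc
      rw [strictMonoOn_map] at hmono
      rw [Finset.card_map] at hcard
      have hs' : ∀ i ∈ t, (if i.val < c.val then i.val else i.val + 1) < j := by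
        intro i hi
        rw [← val_succAbove]
        exact hs _ (by simpa using hi)
      split_ifs with hj
      · refine ⟨t, fun i hi => ?_, hcard, hmono⟩
        have := hs' i hi
        split_ifs at this <;> omega
      · refine Or.inl ⟨t, fun i hi => ?_, hcard, hmono⟩
        have := hs' i hi
        split_ifs at this <;> omega
  · intro h
    have lift : ∀ j', (∀ i : ℕ, i < j' → (if i < c.val then i else i + 1) < j) → HasInc σ j' m →
        HasInc (insMax c σ) j m := by
      rintro j' hj' ⟨t, ht, hcard, hmono⟩
      refine ⟨t.map c.succAboveEmb, ?_, by rw [Finset.card_map, hcard],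
        (strictMonoOn_map c σ).2 hmono⟩
      intro a ha
      obtain ⟨i, hi, rfl⟩ := Finset.mem_map.1 ha
      rw [Fin.coe_succAboveEmb, val_succAbove]
      exact hj' _ (ht i hi)
    split_ifs at h with hj
    · exact lift j (fun i hi => by split_ifs <;> omega) h
    · rcases h with h | ⟨m', rfl, t, ht, hcard, hmono⟩
      · exact lift (j - 1) (fun i hi => by split_ifs <;> omega) h
      · have hcn : c ∉ t.map c.succAboveEmb := by
          intro h
          obtain ⟨i, _, hi⟩ := Finset.mem_map.1 h
          exact Fin.succAbove_ne c i hi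
        have hlt : ∀ a ∈ t.map c.succAboveEmb, a.val < c.val := by
          intro a ha
          obtain ⟨i, hi, rfl⟩ := Finset.mem_map.1 ha
          rw [Fin.coe_succAboveEmb, val_succAbove, if_pos (ht i hi)]
          exact ht i hi
        refine ⟨insert c (t.map c.succAboveEmb), ?_, ?_, ?_⟩
        · intro a ha
          rcases Finset.mem_insert.1 ha with rfl | ha
          · omega
          · have := hlt a ha; omega
        · rw [Finset.card_insert_of_notMem hcn, Finset.card_map, hcard]
        · intro a ha b hb hab
          rw [Finset.coe_insert, Set.mem_insert_iff, Finset.mem_coe] at ha hb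
          rcases ha with rfl | ha <;> rcases hb with rfl | hb
          · exact absurd hab (lt_irrefl _)
          · exact absurd hab (not_lt.2 (Fin.le_def.2 (hlt b hb).le))
          · obtain ⟨i, _, rfl⟩ := Finset.mem_map.1 ha
            simp [Fin.castSucc_lt_last]
          · exact (strictMonoOn_map c σ).2 hmono ha hb hab

/-- Schensted's theorem, in all prefixes at once. -/
lemma hasInc_iff : ∀ {k : ℕ} (π : Equiv.Perm (Fin k)) {j : ℕ} (m : ℕ), j ≤ k →
    (HasInc π j m ↔ m ≤ zeros (word k π) j) := by
  intro k
  induction k with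
  | zero =>
    intro π j m _
    simp only [word, zeros, nonpos_iff_eq_zero]
    constructor
    · rintro ⟨s, _, hcard, _⟩
      rw [← hcard, Finset.card_eq_zero]
      exact Finset.eq_empty_of_isEmpty s
    · rintro rfl
      exact ⟨∅, by simp, rfl, by simp [StrictMonoOn]⟩
  | succ k ih =>
    intro π j m hj
    obtain ⟨c, σ, rfl⟩ := exists_insMax π
    have hl := (word_spec σ).2
    have hc : c.val ≤ k := by omega
    rw [hasInc_insMax, word_insMax, zeros_ins (by omega) (by omega)]
    split_ifs with h
    · exact ih σ m (by omega)
    · rw [ih σ m (by omega)]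
      constructor
      · rintro (h1 | ⟨m', rfl, h1⟩)
        · exact h1.trans (le_max_left _ _)
        · rw [ih σ m' hc] at h1
          exact le_max_of_le_right (by omega)
      · intro h1
        rcases le_max_iff.1 h1 with h1 | h1
        · exact Or.inl h1
        · rcases m with _ | m'
          · exact Or.inl (Nat.zero_le _)
          · exact Or.inr ⟨m', rfl, (ih σ m' hc).2 (by omega)⟩

lemma permLIS_eq {k : ℕ} (π : Equiv.Perm (Fin k)) : permLIS k π = cnt (word k π) 0 := by
  have h : {m : ℕ | ∃ s : Finset (Fin k), s.card = m ∧
      StrictMonoOn (fun i => π i) (s : Set (Fin k))} = Set.Iic (cnt (word k π) 0) := by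
    ext m
    rw [← zeros_length, (word_spec π).2, Set.mem_Iic, ← hasInc_iff π m le_rfl]
    constructor
    · rintro ⟨s, h1, h2⟩
      exact ⟨s, fun i _ => i.isLt, h1, h2⟩
    · rintro ⟨s, _, h1, h2⟩
      exact ⟨s, h1, h2⟩
  rw [permLIS, h]
  exact csSup_Iic

/-- The counting form of the Robinson–Schensted correspondence: there are `f^λ` words of content `λ`,
and each is the word of `f^λ` permutations. -/
lemma ncard_permLIS (k n : ℕ) :
    {π : Equiv.Perm (Fin k) | permLIS k π ≤ n}.ncard =
      ∑ lam ∈ Finset.univ.filter (fun lam : Nat.Partition k => nthPart lam.parts 0 ≤ n),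
        sytCount lam.parts ^ 2 := by
  have hsh : ∀ π : Equiv.Perm (Fin k), ∃ lam : Nat.Partition k,
      nthPart lam.parts = cnt (word k π) := fun π => by
    have := (word_spec π).1.isPart
    rw [(word_spec π).2] at this
    exact nthPart_surjective this
  choose sh hsh using hsh
  rw [Set.ncard_eq_toFinset_card', Finset.card_eq_sum_card_fiberwise (f := sh)
    (t := Finset.univ.filter (fun lam : Nat.Partition k => nthPart lam.parts 0 ≤ n))]
  · refine Finset.sum_congr rfl fun lam hlam => ?_
    have hp := isPart_nthPart lam
    obtain ⟨hfin, hcard⟩ := ncard_Words hp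
    rw [sytCount_eq]
    rw [Finset.card_eq_sum_card_fiberwise (f := word k) (t := hfin.toFinset)]
    · rw [sq, ← hcard, Set.ncard_eq_toFinset_card _ hfin, ← smul_eq_mul]
      apply Finset.sum_eq_card_nsmul
      intro w hw
      obtain ⟨hl, hy, hc⟩ := hfin.mem_toFinset.1 hw
      rw [← Set.ncard_eq_toFinset_card _ hfin, hcard, ← hc, ← ncard_word hy hl,
        ← Set.ncard_coe_finset]
      congr 1
      ext π
      simp only [Finset.coe_filter, Finset.mem_filter, Set.mem_toFinset, Set.mem_ofPred_eq]
      constructor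
      · exact fun h => h.2
      · rintro rfl
        refine ⟨⟨?_, ?_⟩, rfl⟩
        · rw [permLIS_eq, hc]
          exact (Finset.mem_filter.1 hlam).2
        · exact nthPart_injective ((hsh π).trans hc)
    · intro π hπ
      simp only [Finset.coe_filter, Set.mem_ofPred_eq] at hπ
      rw [Finset.mem_coe, hfin.mem_toFinset]
      exact ⟨(word_spec π).2, (word_spec π).1, by rw [← hsh π, hπ.2]⟩
  · intro π hπ
    simp only [Set.coe_toFinset, Set.mem_ofPred_eq] at hπ
    simp only [Finset.coe_filter, Finset.mem_univ, true_and, Set.mem_ofPred_eq]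
    rw [hsh π, ← permLIS_eq]
    exact hπ

/-! ### The determinantal formula for the number of standard Young tableaux -/

/-- `x ^ m / m!`, extended by zero to negative `m`. -/
noncomputable def ex (x : ℝ) (m : ℤ) : ℝ := if 0 ≤ m then x ^ m.toNat / (m.toNat.factorial : ℝ) else 0

lemma ex_nat (x : ℝ) (m : ℕ) : ex x m = x ^ m / (m.factorial : ℝ) := by simp [ex]

lemma ex_neg {x : ℝ} {m : ℤ} (h : m < 0) : ex x m = 0 := if_neg (not_le.2 h)

lemma mul_ex (x : ℝ) (m : ℤ) : (m : ℝ) * ex x m = x * ex x (m - 1) := by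
  rcases lt_trichotomy m 0 with h | rfl | h
  · rw [ex_neg h, ex_neg (by omega)]; simp
  · rw [ex_neg (show (0 : ℤ) - 1 < 0 by omega)]; simp
  · obtain ⟨a, rfl⟩ : ∃ a : ℕ, m = (a + 1 : ℕ) := ⟨m.toNat - 1, by omega⟩
    have h1 : ((a + 1 : ℕ) : ℤ) - 1 = (a : ℕ) := by push_cast; ring
    rw [h1, ex_nat, ex_nat, Nat.factorial_succ]
    have : (a.factorial : ℝ) ≠ 0 := by positivity
    push_cast
    field_simp
    ring

/-- The Jacobi–Trudi type determinant `det (x ^ (qᵢ - i + j) / (qᵢ - i + j)!)`. -/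
noncomputable def JT (x : ℝ) {n : ℕ} (q : Fin n → ℤ) : ℝ :=
  Matrix.det (Matrix.of fun i j : Fin n => ex x (q i - (i : ℤ) + (j : ℤ)))

lemma JT_apply (x : ℝ) {n : ℕ} (q : Fin n → ℤ) :
    JT x q = ∑ σ : Equiv.Perm (Fin n), ((Equiv.Perm.sign σ : ℤ) : ℝ) *
      ∏ i, ex x (q i - (i : ℤ) + (σ i : ℤ)) := by
  rw [JT, ← Matrix.det_transpose, Matrix.det_apply']
  rfl

/-- Applying `m · ex m = x · ex (m - 1)` in each row of each term of the Leibniz expansion gives the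
branching rule. -/
lemma JT_rec (x : ℝ) {n : ℕ} (q : Fin n → ℤ) :
    (∑ i, (q i : ℝ)) * JT x q = x * ∑ i, JT x (Function.update q i (q i - 1)) := by
  simp only [JT_apply]
  rw [Finset.sum_comm, Finset.mul_sum, Finset.mul_sum]
  refine Finset.sum_congr rfl fun σ _ => ?_
  have h1 : ∀ i : Fin n, x * ∏ i', ex x (Function.update q i (q i - 1) i' - (i' : ℤ) + (σ i' : ℤ)) =
      ((q i : ℝ) - (i : ℕ) + (σ i : ℕ)) * ∏ i', ex x (q i' - (i' : ℤ) + (σ i' : ℤ)) := by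
    intro i
    rw [← Finset.mul_prod_erase _ _ (Finset.mem_univ i),
      ← Finset.mul_prod_erase _ (fun i' => ex x (q i' - (i' : ℤ) + (σ i' : ℤ))) (Finset.mem_univ i)]
    have h2 : ∏ i' ∈ Finset.univ.erase i,
        ex x (Function.update q i (q i - 1) i' - (i' : ℤ) + (σ i' : ℤ)) =
        ∏ i' ∈ Finset.univ.erase i, ex x (q i' - (i' : ℤ) + (σ i' : ℤ)) :=
      Finset.prod_congr rfl fun i' hi' => by
        rw [Function.update_of_ne (Finset.mem_erase.1 hi').1]
    have h3 := mul_ex x (q i - (i : ℤ) + (σ i : ℤ))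
    rw [h2, ← mul_assoc, ← mul_assoc]
    congr 1
    rw [Function.update_self]
    push_cast at h3
    rw [h3]
    congr 2
    ring
  have h4 : ∑ i : Fin n, ((q i : ℝ) - (i : ℕ) + (σ i : ℕ)) = ∑ i, (q i : ℝ) := by
    rw [Finset.sum_add_distrib, Finset.sum_sub_distrib,
      Equiv.sum_comp σ (fun i : Fin n => ((i : ℕ) : ℝ))]
    ring
  calc _ = ((Equiv.Perm.sign σ : ℤ) : ℝ) * ∑ i : Fin n, ((q i : ℝ) - (i : ℕ) + (σ i : ℕ)) *
        ∏ i', ex x (q i' - (i' : ℤ) + (σ i' : ℤ)) := by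
        rw [← Finset.sum_mul, h4]; ring
    _ = _ := by
        rw [← Finset.mul_sum]
        simp only [← h1, ← Finset.mul_sum]
        ring

/-- Removing a cell from a row that does not end in a corner gives two equal rows, or a zero row. -/
lemma JT_not_corner (x : ℝ) {n : ℕ} {p : ℕ → ℕ} (hn : p n = 0) (i : Fin n)
    (hi : p (i + 1) = p i) :
    JT x (Function.update (fun i : Fin n => (p i : ℤ)) i ((p i : ℤ) - 1)) = 0 := by
  by_cases h : (i : ℕ) + 1 < n
  · apply Matrix.det_zero_of_row_eq (i := i) (j := ⟨i + 1, h⟩)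
    · intro h'
      have := congrArg Fin.val h'
      simp at this
    · funext j
      simp only [Matrix.of_apply]
      rw [Function.update_self, Function.update_of_ne (by
        intro h'
        have := congrArg Fin.val h'
        simp at this)]
      simp only [hi]
      congr 1
      push_cast
      ring
  · have hin : (i : ℕ) + 1 = n := by omega
    apply Matrix.det_eq_zero_of_row_eq_zero i
    intro j
    simp only [Matrix.of_apply]
    rw [Function.update_self]
    apply ex_neg
    rw [hin, hn] at hi
    rw [← hi]
    omega

/-- The determinantal formula `x ^ |λ| f^λ / |λ|! = det (x ^ (λᵢ - i + j) / (λᵢ - i + j)!)` for `λ`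
with at most `n` parts: both sides satisfy the same recursion. -/
lemma JT_eq (x : ℝ) {n : ℕ} : ∀ {k : ℕ} {p : ℕ → ℕ}, IsPart k p → p n = 0 →
    JT x (fun i : Fin n => (p i : ℤ)) = x ^ k * syt k p / (k.factorial : ℝ) := by
  intro k
  induction k with
  | zero =>
    intro p hp _
    rw [isPart_zero_iff] at hp
    subst hp
    rw [syt, syt_zero, JT, Matrix.det_of_isUpperTriangular]
    · simp [ex]
    · intro i j hij
      simp only [id] at hij
      simp only [Matrix.of_apply]
      apply ex_neg
      have : (j : ℕ) < i := hij
      simp only [Pi.zero_apply]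
      omega
  | succ k ih =>
    intro p hp hn
    have h := JT_rec x (fun i : Fin n => (p i : ℤ))
    have hsum : ∑ i : Fin n, (((p i : ℕ) : ℤ) : ℝ) = k + 1 := by
      have := hp.sum_eq hn
      rw [← Fin.sum_univ_eq_sum_range] at this
      exact_mod_cast this
    have hterm : ∀ i : Fin n, JT x (Function.update (fun i : Fin n => (p i : ℤ)) i ((p i : ℤ) - 1)) =
        if p (i + 1) < p i then x ^ k * syt k (dec p i) / (k.factorial : ℝ) else 0 := by
      intro i
      split_ifs with hi
      · rw [← ih (hp.dec hi) (by simp [dec, hn])]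
        congr 1
        funext a
        by_cases ha : a = i
        · subst ha
          rw [Function.update_self]
          simp only [dec, if_true]
          omega
        · rw [Function.update_of_ne ha]
          simp [dec, Fin.val_ne_of_ne ha]
      · exact JT_not_corner x hn i (le_antisymm (hp.1 (Nat.le_succ _)) (not_lt.1 hi))
    rw [hsum, Finset.sum_congr rfl fun i _ => hterm i,
      Fin.sum_univ_eq_sum_range (fun i => if p (i + 1) < p i then
        x ^ k * (syt k (dec p i) : ℝ) / (k.factorial : ℝ) else 0)] at h
    rw [syt_succ hp hn, Nat.factorial_succ]
    have h1 : ((k : ℝ) + 1) ≠ 0 := by positivity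
    have h2 : (k.factorial : ℝ) ≠ 0 := by positivity
    apply mul_left_cancel₀ h1
    rw [h]
    have h3 : (((k + 1) * k.factorial : ℕ) : ℝ) = ((k : ℝ) + 1) * k.factorial := by push_cast; ring
    rw [h3, Nat.cast_sum, Finset.mul_sum, Finset.mul_sum, Finset.sum_div, Finset.mul_sum]
    refine Finset.sum_congr rfl fun b _ => ?_
    split_ifs
    · field_simp
      ring
    · simp

/-! ### Sums of squares of minors -/

/-- The `n × n` minor of the `ℕ × n` matrix `φ` on the rows `t`. -/
noncomputable def minor {n : ℕ} (φ : ℕ → Fin n → ℝ) (t : Fin n → ℕ) : ℝ :=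
  Matrix.det (Matrix.of fun i j => φ (t i) j)

lemma minor_comp_perm {n : ℕ} (φ : ℕ → Fin n → ℝ) (t : Fin n → ℕ) (σ : Equiv.Perm (Fin n)) :
    minor φ (t ∘ σ) = ((Equiv.Perm.sign σ : ℤ) : ℝ) * minor φ t :=
  Matrix.det_permute σ (Matrix.of fun i j => φ (t i) j)

lemma minor_of_not_injective {n : ℕ} (φ : ℕ → Fin n → ℝ) {t : Fin n → ℕ}
    (ht : ¬ Function.Injective t) : minor φ t = 0 := by
  simp only [Function.Injective, not_forall] at ht
  obtain ⟨a, b, hab, hne⟩ := ht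
  exact Matrix.det_zero_of_row_eq hne (by funext j; simp [hab])

/-- The strictly increasing tuples with entries below `N`. -/
noncomputable def strictTuples (n N : ℕ) : Finset {t : Fin n → ℕ // StrictMono t} :=
  (Fintype.piFinset fun _ : Fin n => Finset.range N).subtype StrictMono

lemma mem_strictTuples {n N : ℕ} {t : {t : Fin n → ℕ // StrictMono t}} :
    t ∈ strictTuples n N ↔ ∀ i, t.1 i < N := by
  simp [strictTuples]

/-- Cauchy–Binet for `φᵀ φ`, with the rows of `φ` truncated at `N`: expand the determinant
multilinearly in its rows; the tuples with a repetition contribute nothing, and every other tuple is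
uniquely a permutation of a strictly increasing one. -/
lemma cauchyBinet {n : ℕ} (φ : ℕ → Fin n → ℝ) (N : ℕ) :
    ∑ t ∈ strictTuples n N, minor φ t.1 ^ 2 =
      Matrix.det (Matrix.of fun j k : Fin n => ∑ s ∈ Finset.range N, φ s j * φ s k) := by
  have h1 : Matrix.det (Matrix.of fun j k : Fin n => ∑ s ∈ Finset.range N, φ s j * φ s k) =
      ∑ l ∈ Fintype.piFinset (fun _ : Fin n => Finset.range N), (∏ j, φ (l j) j) * minor φ l := by
    have h := (Matrix.detRowAlternating (n := Fin n) (R := ℝ)).toMultilinearMap.map_sum_finset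
      (fun j s => φ s j • φ s) (fun _ => Finset.range N)
    have h2 : (Matrix.of fun j k : Fin n => ∑ s ∈ Finset.range N, φ s j * φ s k) =
        fun j => ∑ s ∈ Finset.range N, φ s j • φ s := by
      funext j k
      simp [Finset.sum_apply]
    rw [h2]
    refine Eq.trans h (Finset.sum_congr rfl fun l _ => ?_)
    rw [MultilinearMap.map_smul_univ]
    rfl
  have h2 : ∑ l ∈ Fintype.piFinset (fun _ : Fin n => Finset.range N), (∏ j, φ (l j) j) * minor φ l =
      ∑ l ∈ (Fintype.piFinset (fun _ : Fin n => Finset.range N)).filter Function.Injective,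
        (∏ j, φ (l j) j) * minor φ l := by
    rw [Finset.sum_filter]
    refine Finset.sum_congr rfl fun l _ => ?_
    split_ifs with h
    · rfl
    · rw [minor_of_not_injective φ h, mul_zero]
  have h3 : ∑ x ∈ strictTuples n N ×ˢ (Finset.univ : Finset (Equiv.Perm (Fin n))),
      (∏ j, φ ((x.1.1 ∘ x.2) j) j) * minor φ (x.1.1 ∘ x.2) =
      ∑ l ∈ (Fintype.piFinset (fun _ : Fin n => Finset.range N)).filter Function.Injective,
        (∏ j, φ (l j) j) * minor φ l := by
    refine Finset.sum_bij (fun x _ => x.1.1 ∘ x.2) ?_ ?_ ?_ (fun _ _ => rfl)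
    · rintro ⟨t, σ⟩ h
      rw [Finset.mem_product, mem_strictTuples] at h
      rw [Finset.mem_filter, Fintype.mem_piFinset]
      exact ⟨fun i => Finset.mem_range.2 (h.1 _), t.2.injective.comp σ.injective⟩
    · rintro ⟨⟨t, ht⟩, σ⟩ - ⟨⟨t', ht'⟩, σ'⟩ - h
      simp only at h
      have h' : t = t' := by
        rw [← ht.range_inj ht', ← EquivLike.range_comp t σ, h, EquivLike.range_comp]
      subst h'
      have : σ = σ' := by
        ext i
        exact congrArg Fin.val (ht.injective (congrFun h i))
      rw [this]
    · intro l hl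
      rw [Finset.mem_filter, Fintype.mem_piFinset] at hl
      have hs : StrictMono (l ∘ Tuple.sort l) :=
        (Tuple.monotone_sort l).strictMono_of_injective (hl.2.comp (Tuple.sort l).injective)
      refine ⟨(⟨l ∘ Tuple.sort l, hs⟩, (Tuple.sort l)⁻¹), ?_, ?_⟩
      · rw [Finset.mem_product, mem_strictTuples]
        exact ⟨fun i => Finset.mem_range.1 (hl.1 _), Finset.mem_univ _⟩
      · funext i
        simp
  rw [h1, h2, ← h3, Finset.sum_product]
  refine Finset.sum_congr rfl fun t _ => ?_
  rw [pow_two]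
  nth_rewrite 1 [minor]
  rw [Matrix.det_apply', Finset.sum_mul]
  -- the Leibniz formula permutes the row index
  refine Finset.sum_congr rfl fun σ _ => ?_
  rw [minor_comp_perm]
  simp only [Matrix.of_apply, Function.comp]
  ring

/-- Cauchy–Binet for infinitely many rows. -/
lemma hasSum_minor {n : ℕ} (φ : ℕ → Fin n → ℝ) (M : Matrix (Fin n) (Fin n) ℝ)
    (hM : ∀ j k, HasSum (fun s => φ s j * φ s k) (M j k)) :
    HasSum (fun t : {t : Fin n → ℕ // StrictMono t} => minor φ t.1 ^ 2) M.det := by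
  have hlim : Filter.Tendsto (fun N => ∑ t ∈ strictTuples n N, minor φ t.1 ^ 2) Filter.atTop
      (nhds M.det) := by
    simp only [cauchyBinet]
    have hc : Continuous fun A : Matrix (Fin n) (Fin n) ℝ => A.det := continuous_id.matrix_det
    refine (hc.tendsto M).comp ?_
    refine tendsto_pi_nhds.2 fun j => tendsto_pi_nhds.2 fun k => ?_
    exact (hM j k).tendsto_sum_nat
  have hmono : Monotone (strictTuples n) := fun a b hab t ht => by
    rw [mem_strictTuples] at ht ⊢
    exact fun i => (ht i).trans_le hab
  have hex : Filter.Tendsto (strictTuples n) Filter.atTop Filter.atTop := by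
    refine Filter.tendsto_atTop_finset_of_monotone hmono fun t => ?_
    refine ⟨Finset.univ.sup t.1 + 1, ?_⟩
    rw [mem_strictTuples]
    exact fun i => Nat.lt_succ_of_le (Finset.le_sup (Finset.mem_univ i))
  have hs : Summable fun t : {t : Fin n → ℕ // StrictMono t} => minor φ t.1 ^ 2 := by
    refine summable_of_sum_le (c := M.det) (fun t => sq_nonneg _) fun u => ?_
    obtain ⟨N, hN⟩ := (hex.eventually_ge_atTop u).exists
    refine (Finset.sum_le_sum_of_subset_of_nonneg hN fun _ _ _ => sq_nonneg _).trans ?_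
    refine Monotone.ge_of_tendsto (fun a b hab => ?_) hlim N
    exact Finset.sum_le_sum_of_subset_of_nonneg (hmono hab) fun _ _ _ => sq_nonneg _
  rw [← tendsto_nhds_unique (hs.hasSum.comp hex) hlim]
  exact hs.hasSum

/-! ### From partitions to strictly increasing tuples -/

/-- The strictly increasing tuple `q_{n-1} < q_{n-2} + 1 < … < q_0 + n - 1` of a partition `q`. -/
def tup (n : ℕ) (q : ℕ → ℕ) : Fin n → ℕ := fun i => q (n - 1 - i) + i

lemma strictMono_tup {n : ℕ} {q : ℕ → ℕ} (hq : Antitone q) : StrictMono (tup n q) := by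
  intro i j hij
  have h1 : (i : ℕ) < j := hij
  have h2 : q (n - 1 - i) ≤ q (n - 1 - j) := hq (by omega)
  simp only [tup]
  omega

/-- Reversing rows and columns identifies the Jacobi–Trudi determinant with a minor. -/
lemma minor_tup (x : ℝ) {n : ℕ} (q : ℕ → ℕ) :
    minor (fun s (j : Fin n) => ex x ((s : ℤ) - (j : ℤ))) (tup n q) =
      JT x (fun i : Fin n => (q i : ℤ)) := by
  rw [JT, ← Matrix.det_submatrix_equiv_self Fin.revPerm, minor]
  congr 1
  ext i j
  simp only [Matrix.of_apply, Matrix.submatrix_apply, Fin.revPerm_apply, tup, Fin.val_rev]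
  have h : n - ((i : ℕ) + 1) = n - 1 - i := by omega
  rw [h]
  congr 1
  have := i.2
  have := j.2
  have h2 : ((n - 1 - i : ℕ) : ℤ) = n - 1 - i := by omega
  have h3 : ((n - (j + 1) : ℕ) : ℤ) = n - 1 - j := by omega
  rw [h2, h3]
  push_cast
  ring

/-- The index set of the sum over partitions. -/
abbrev BddPart (n : ℕ) : Type :=
  Σ k : ℕ, {lam : Nat.Partition k // nthPart lam.parts 0 ≤ n}

/-- The strictly increasing tuple attached to the conjugate of a partition with first part at most
`n`, which is a partition with at most `n` parts. -/
noncomputable def toTup (n : ℕ) (y : BddPart n) : {t : Fin n → ℕ // StrictMono t} :=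
  ⟨tup n (conj (nthPart y.2.1.parts)), strictMono_tup (isPart_nthPart y.2.1).conj.1⟩

lemma conj_nthPart_eq_zero {n : ℕ} (y : BddPart n) : conj (nthPart y.2.1.parts) n = 0 := by
  obtain ⟨ha, m, hm, _⟩ := isPart_nthPart y.2.1
  exact (conj_eq_zero ha hm).2 y.2.2

lemma toTup_injective (n : ℕ) : Function.Injective (toTup n) := by
  rintro y z h
  have hy := (isPart_nthPart y.2.1)
  have hz := (isPart_nthPart z.2.1)
  have hy0 := conj_nthPart_eq_zero y
  have hz0 := conj_nthPart_eq_zero z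
  have hq : conj (nthPart y.2.1.parts) = conj (nthPart z.2.1.parts) := by
    funext i
    rcases lt_or_ge i n with hi | hi
    · have h1 := congrFun (congrArg Subtype.val h) ⟨n - 1 - i, by omega⟩
      simp only [toTup, tup] at h1
      rw [show n - 1 - (n - 1 - i) = i by omega] at h1
      omega
    · rw [zero_of_le hy.conj.1 hy0 hi, zero_of_le hz.conj.1 hz0 hi]
  have hk : y.1 = z.1 := by
    rw [← hy.conj.sum_eq hy0, ← hz.conj.sum_eq hz0, hq]
  have hp : nthPart y.2.1.parts = nthPart z.2.1.parts := by
    obtain ⟨_, m, hm, _⟩ := hy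
    obtain ⟨_, m', hm', _⟩ := hz
    rw [← conj_conj (isPart_nthPart y.2.1).1 hm, hq, conj_conj (isPart_nthPart z.2.1).1 hm']
  obtain ⟨k, lam, hlam⟩ := y
  obtain ⟨k', mu, hmu⟩ := z
  simp only at hk hp
  subst hk
  have := nthPart_injective hp
  subst this
  rfl

/-- A strictly increasing tuple becomes weakly increasing when `0, 1, …, n - 1` is subtracted. -/
lemma le_strictMono_sub {n : ℕ} {t : Fin n → ℕ} (ht : StrictMono t) {i j : Fin n} (h : i ≤ j) :
    t i - i ≤ t j - (j : ℕ) := by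
  have key : ∀ d : ℕ, ∀ i j : Fin n, (j : ℕ) = i + d → t i + d ≤ t j := by
    intro d
    induction d with
    | zero =>
      intro i j hij
      rw [show i = j from Fin.ext (by omega)]
      omega
    | succ d ih =>
      intro i j hij
      have h1 := ih i ⟨i + d, by omega⟩ rfl
      have h2 : t ⟨i + d, by omega⟩ < t j := ht (Fin.lt_def.2 (by simp only; omega))
      omega
  have h' : (i : ℕ) ≤ j := h
  have := key (j - i) i j (by omega)
  omega

lemma toTup_surjective (n : ℕ) : Function.Surjective (toTup n) := by
  rintro ⟨t, ht⟩
  have hge : ∀ i : Fin n, (i : ℕ) ≤ t i := by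
    intro i
    have hi := i.2
    have key : ∀ a (ha : a < n), a ≤ t ⟨a, ha⟩ := by
      intro a
      induction a with
      | zero => intro _; omega
      | succ a ih =>
        intro ha
        have h1 := ih (by omega)
        have h2 : t ⟨a, by omega⟩ < t ⟨a + 1, ha⟩ := ht (Fin.lt_def.2 (by simp))
        omega
    exact key i hi
  let q : ℕ → ℕ := fun i => if h : i < n then t ⟨n - 1 - i, by omega⟩ - (n - 1 - i) else 0
  have hqa : Antitone q := by
    intro a b hab
    simp only [q]
    split_ifs with hb ha
    · exact le_strictMono_sub ht (Fin.le_def.2 (by simp only; omega))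
    · omega
    · omega
    · exact le_rfl
  have hq0 : q n = 0 := by simp [q]
  have hq : IsPart (∑ i ∈ Finset.range n, q i) q := ⟨hqa, n, hq0, rfl⟩
  obtain ⟨lam, hlam⟩ := nthPart_surjective hq.conj
  have hcc : conj (conj q) = q := conj_conj hqa hq0
  have hle : nthPart lam.parts 0 ≤ n := by
    obtain ⟨ha, m, hm, _⟩ := isPart_nthPart lam
    rw [← conj_eq_zero ha hm, hlam, hcc, hq0]
  refine ⟨⟨_, lam, hle⟩, Subtype.ext ?_⟩
  funext i
  have h1 : n - 1 - i < n := by have := i.2; omega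
  have h2 := hge i
  have h3 : (⟨n - 1 - (n - 1 - i), by omega⟩ : Fin n) = i := Fin.ext (by
    have := i.2
    simp only
    omega)
  simp only [toTup, tup, hlam, hcc, q, dif_pos h1, h3]
  have := i.2
  omega

lemma toTup_bijective (n : ℕ) : Function.Bijective (toTup n) :=
  ⟨toTup_injective n, toTup_surjective n⟩

/-- The sum over partitions of bounded first part is a determinant whose entries are given by
series. -/
lemma hasSum_partitions {ξ : ℝ} (hξ : 0 ≤ ξ) (n : ℕ) (M : Matrix (Fin n) (Fin n) ℝ)
    (hM : ∀ j k : Fin n, HasSum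
      (fun s : ℕ => ex (Real.sqrt ξ) ((s : ℤ) - (j : ℤ)) * ex (Real.sqrt ξ) ((s : ℤ) - (k : ℤ)))
      (M j k)) :
    HasSum (fun nn : ℕ =>
      ∑ lam ∈ Finset.univ.filter (fun lam : Nat.Partition nn => nthPart lam.parts 0 ≤ n),
        ξ ^ nn * (sytCount lam.parts : ℝ) ^ 2 / ((nn.factorial : ℝ)) ^ 2) M.det := by
  have h := hasSum_minor (fun s (j : Fin n) => ex (Real.sqrt ξ) ((s : ℤ) - (j : ℤ))) M hM
  rw [← (Equiv.ofBijective (toTup n) (toTup_bijective n)).hasSum_iff] at h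
  refine h.sigma fun k => ?_
  have key : ∀ lam : {lam : Nat.Partition k // nthPart lam.parts 0 ≤ n},
      ξ ^ k * (sytCount lam.1.parts : ℝ) ^ 2 / ((k.factorial : ℝ)) ^ 2 =
        minor (fun s (j : Fin n) => ex (Real.sqrt ξ) ((s : ℤ) - (j : ℤ)))
          (toTup n ⟨k, lam⟩).1 ^ 2 := by
    intro lam
    have hp := isPart_nthPart lam.1
    rw [toTup, minor_tup, JT_eq _ hp.conj (conj_nthPart_eq_zero ⟨k, lam⟩), syt_conj hp,
      sytCount_eq, div_pow, mul_pow, ← pow_mul, mul_comm k 2, pow_mul, Real.sq_sqrt hξ]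
  rw [Finset.sum_subtype (p := fun lam : Nat.Partition k => nthPart lam.parts 0 ≤ n) _
    (fun lam => by simp), Finset.sum_congr rfl fun lam _ => key lam]
  exact hasSum_fintype _

/-! ### The Fourier coefficients -/

lemma hasSum_of_eq {ι : Type*} {f g : ι → ℂ} {a : ℂ} (h : f = g) (hg : HasSum g a) :
    HasSum f a := h ▸ hg

lemma hasSum_mul_nat {f g : ℕ → ℂ} {a b : ℂ} (hf : HasSum f a) (hg : HasSum g b)
    (hs : Summable fun x : ℕ × ℕ => f x.1 * g x.2) :
    HasSum (fun x : ℕ × ℕ => f x.1 * g x.2) (a * b) :=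
  hf.mul hg hs

/-- The exponential series, shifted by `k`. -/
lemma hasSum_ex (x : ℝ) (k : ℕ) (z : ℂ) :
    HasSum (fun s : ℕ => ((ex x ((s : ℤ) - (k : ℤ)) : ℝ) : ℂ) * z ^ s) (z ^ k * Complex.exp (x * z)) := by
  have hinj : Function.Injective fun a : ℕ => a + k := add_left_injective k
  rw [← hinj.hasSum_iff]
  · have h : HasSum (fun a : ℕ => ((x : ℂ) * z) ^ a / (a.factorial : ℂ)) (Complex.exp (x * z)) := by
      rw [Complex.exp_eq_exp_ℂ]
      exact NormedSpace.expSeries_div_hasSum_exp _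
    refine hasSum_of_eq ?_ (h.mul_left (z ^ k))
    funext a
    simp only [Function.comp]
    rw [show (((a + k : ℕ) : ℤ) - (k : ℤ)) = (a : ℕ) by push_cast; ring, ex_nat]
    push_cast
    rw [mul_pow, pow_add]
    ring
  · intro s hs
    have : s < k := by
      by_contra h
      exact hs ⟨s - k, by simp only; omega⟩
    rw [ex_neg (by omega)]
    simp

lemma summable_norm_ex (x : ℝ) (k : ℕ) : Summable fun s : ℕ => |ex x ((s : ℤ) - (k : ℤ))| := by
  have hinj : Function.Injective fun a : ℕ => a + k := add_left_injective k
  rw [← hinj.summable_iff]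
  · refine (Real.summable_pow_div_factorial |x|).congr fun a => ?_
    simp only [Function.comp]
    rw [show (((a + k : ℕ) : ℤ) - (k : ℤ)) = (a : ℕ) by push_cast; ring, ex_nat, abs_div, abs_pow,
      Nat.abs_cast]
  · intro s hs
    have : s < k := by
      by_contra h
      exact hs ⟨s - k, by simp only; omega⟩
    rw [ex_neg (by omega), abs_zero]

/-- Orthogonality of the exponentials. -/
lemma integral_fourier (m : ℤ) :
    ∫ θ in (0 : ℝ)..(2 * Real.pi), Complex.exp ((m : ℂ) * Complex.I * (θ : ℂ)) =
      if m = 0 then ((2 * Real.pi : ℝ) : ℂ) else 0 := by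
  split_ifs with h
  · subst h
    simp
  · have hc : (m : ℂ) * Complex.I ≠ 0 := mul_ne_zero (by exact_mod_cast h) Complex.I_ne_zero
    rw [integral_exp_mul_complex hc]
    have h1 : (m : ℂ) * Complex.I * ((2 * Real.pi : ℝ) : ℂ) = m * (2 * Real.pi * Complex.I) := by
      push_cast; ring
    rw [h1, Complex.exp_int_mul_two_pi_mul_I]
    simp

/-- The terms of the double series of `e ^ (-i (j - k) θ) e ^ (x e ^ (iθ)) e ^ (x e ^ (-iθ))`. -/
noncomputable def fterm (x : ℝ) (j k : ℕ) (a : ℕ × ℕ) (θ : ℝ) : ℂ :=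
  ((ex x ((a.1 : ℤ) - (k : ℤ)) * ex x ((a.2 : ℤ) - (j : ℤ)) : ℝ) : ℂ) *
    Complex.exp ((((a.1 : ℤ) - (a.2 : ℤ) : ℤ) : ℂ) * Complex.I * (θ : ℂ))

lemma norm_fterm (x : ℝ) (j k : ℕ) (a : ℕ × ℕ) (θ : ℝ) :
    ‖fterm x j k a θ‖ = |ex x ((a.1 : ℤ) - (k : ℤ))| * |ex x ((a.2 : ℤ) - (j : ℤ))| := by
  rw [fterm, norm_mul, Complex.norm_real, Real.norm_eq_abs, abs_mul]
  rw [show ((((a.1 : ℤ) - (a.2 : ℤ) : ℤ) : ℂ) * Complex.I * (θ : ℂ)) =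
    (((((a.1 : ℤ) - (a.2 : ℤ) : ℤ) : ℝ) * θ : ℝ) : ℂ) * Complex.I by push_cast; ring,
    Complex.norm_exp_ofReal_mul_I, mul_one]

lemma summable_bound (x : ℝ) (j k : ℕ) : Summable fun a : ℕ × ℕ =>
    |ex x ((a.1 : ℤ) - (k : ℤ))| * |ex x ((a.2 : ℤ) - (j : ℤ))| :=
  Summable.mul_of_nonneg
    (f := fun s : ℕ => |ex x ((s : ℤ) - (k : ℤ))|) (g := fun s : ℕ => |ex x ((s : ℤ) - (j : ℤ))|)
    (summable_norm_ex x k) (summable_norm_ex x j) (fun _ => abs_nonneg _) (fun _ => abs_nonneg _)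

/-- The factorization `e ^ (2 x cos θ) = e ^ (x e ^ (iθ)) e ^ (x e ^ (-iθ))`. -/
lemma exp_cos_factor (x θ : ℝ) (j k : ℕ) :
    Complex.exp (-(((j : ℤ) - (k : ℤ) : ℤ) : ℂ) * Complex.I * (θ : ℂ)) *
        Complex.exp (((2 * x * Real.cos θ : ℝ) : ℂ)) =
      (Complex.exp (θ * Complex.I) ^ k * Complex.exp (x * Complex.exp (θ * Complex.I))) *
      (Complex.exp (-(θ * Complex.I)) ^ j * Complex.exp (x * Complex.exp (-(θ * Complex.I)))) := by
  rw [← Complex.exp_nat_mul, ← Complex.exp_nat_mul, ← Complex.exp_add, ← Complex.exp_add,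
    ← Complex.exp_add, ← Complex.exp_add]
  congr 1
  push_cast
  rw [Complex.cos, show -(θ : ℂ) * Complex.I = -(θ * Complex.I) by ring]
  ring

lemma fterm_eq (x : ℝ) (j k : ℕ) (θ : ℝ) (a : ℕ × ℕ) : fterm x j k a θ =
    (((ex x ((a.1 : ℤ) - (k : ℤ)) : ℝ) : ℂ) * Complex.exp (θ * Complex.I) ^ a.1) *
      (((ex x ((a.2 : ℤ) - (j : ℤ)) : ℝ) : ℂ) * Complex.exp (-(θ * Complex.I)) ^ a.2) := by
  have he : Complex.exp ((((a.1 : ℤ) - (a.2 : ℤ) : ℤ) : ℂ) * Complex.I * (θ : ℂ)) =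
      Complex.exp (θ * Complex.I) ^ a.1 * Complex.exp (-(θ * Complex.I)) ^ a.2 := by
    rw [← Complex.exp_nat_mul, ← Complex.exp_nat_mul, ← Complex.exp_add]
    congr 1
    push_cast
    ring
  rw [fterm, he]
  push_cast
  ring

/-- Product of the two exponential series, in terms of `z` and `w` standing for `e ^ (± iθ)`. -/
lemma hasSum_ex_mul (x : ℝ) (j k : ℕ) (z w : ℂ)
    (hs : Summable fun a : ℕ × ℕ => (((ex x ((a.1 : ℤ) - (k : ℤ)) : ℝ) : ℂ) * z ^ a.1) *
      (((ex x ((a.2 : ℤ) - (j : ℤ)) : ℝ) : ℂ) * w ^ a.2)) :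
    HasSum (fun a : ℕ × ℕ => (((ex x ((a.1 : ℤ) - (k : ℤ)) : ℝ) : ℂ) * z ^ a.1) *
      (((ex x ((a.2 : ℤ) - (j : ℤ)) : ℝ) : ℂ) * w ^ a.2))
      ((z ^ k * Complex.exp (x * z)) * (w ^ j * Complex.exp (x * w))) := by
  have h := hasSum_mul_nat (hasSum_ex x k z) (hasSum_ex x j w) hs
  exact h

lemma hasSum_fterm (x : ℝ) (j k : ℕ) (θ : ℝ) : HasSum (fun a => fterm x j k a θ)
    (Complex.exp (-(((j : ℤ) - (k : ℤ) : ℤ) : ℂ) * Complex.I * (θ : ℂ)) *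
        Complex.exp (((2 * x * Real.cos θ : ℝ) : ℂ))) := by
  have hs : Summable fun a => fterm x j k a θ :=
    Summable.of_norm ((summable_bound x j k).congr fun a => (norm_fterm x j k a θ).symm)
  have hE := funext (fterm_eq x j k θ)
  rw [hE] at hs
  rw [exp_cos_factor]
  exact hasSum_of_eq hE (hasSum_ex_mul x j k _ _ hs)

lemma integral_fterm (x : ℝ) (j k : ℕ) (a : ℕ × ℕ) :
    ((1 / (2 * Real.pi) : ℝ) : ℂ) * ∫ θ in (0 : ℝ)..(2 * Real.pi), fterm x j k a θ =
      if a.1 = a.2 then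
        ((ex x ((a.1 : ℤ) - (k : ℤ)) * ex x ((a.2 : ℤ) - (j : ℤ)) : ℝ) : ℂ) else 0 := by
  have hpi : ((2 * Real.pi : ℝ) : ℂ) ≠ 0 := by
    exact_mod_cast (by positivity : (2 * Real.pi : ℝ) ≠ 0)
  simp only [fterm]
  rw [intervalIntegral.integral_const_mul, integral_fourier]
  have : ((a.1 : ℤ) - (a.2 : ℤ) = 0) ↔ a.1 = a.2 := by omega
  simp only [this]
  split_ifs
  · rw [Complex.ofReal_div, Complex.ofReal_one]
    field_simp
  · simp

/-- Termwise integration of the double series of `e ^ (x e ^ (iθ)) e ^ (x e ^ (-iθ))` leaves only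
the diagonal terms, so the Fourier coefficients are the entries of a Gram matrix. -/
lemma hasSum_toeplitz (x : ℝ) (j k : ℕ) :
    HasSum (fun s : ℕ => ((ex x ((s : ℤ) - (j : ℤ)) * ex x ((s : ℤ) - (k : ℤ)) : ℝ) : ℂ))
      (((1 / (2 * Real.pi) : ℝ) : ℂ) * ∫ θ in (0 : ℝ)..(2 * Real.pi),
          Complex.exp (-(((j : ℤ) - (k : ℤ) : ℤ) : ℂ) * Complex.I * (θ : ℂ)) *
          Complex.exp (((2 * x * Real.cos θ : ℝ) : ℂ))) := by
  have hint : HasSum (fun a => ∫ θ in (0 : ℝ)..(2 * Real.pi), fterm x j k a θ)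
      (∫ θ in (0 : ℝ)..(2 * Real.pi),
          Complex.exp (-(((j : ℤ) - (k : ℤ) : ℤ) : ℂ) * Complex.I * (θ : ℂ)) *
          Complex.exp (((2 * x * Real.cos θ : ℝ) : ℂ))) := by
    refine intervalIntegral.hasSum_integral_of_dominated_convergence (fun a _ =>
      |ex x ((a.1 : ℤ) - (k : ℤ))| * |ex x ((a.2 : ℤ) - (j : ℤ))|) ?_ ?_ ?_ ?_ ?_
    · intro a
      exact Continuous.aestronglyMeasurable (by unfold fterm; fun_prop)
    · exact fun a => Filter.Eventually.of_forall fun θ _ => (norm_fterm x j k a θ).le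
    · exact Filter.Eventually.of_forall fun θ _ => summable_bound x j k
    · exact intervalIntegrable_const
    · exact Filter.Eventually.of_forall fun θ _ => hasSum_fterm x j k θ
  have hsum := hint.mul_left ((1 / (2 * Real.pi) : ℝ) : ℂ)
  simp only [integral_fterm] at hsum
  have hinj : Function.Injective fun s : ℕ => (s, s) := fun s t h => congrArg Prod.fst h
  rw [← hinj.hasSum_iff] at hsum
  · refine hasSum_of_eq ?_ hsum
    funext s
    simp [mul_comm]
  · rintro ⟨s, t⟩ h
    exact if_neg fun hst => h ⟨s, Prod.ext rfl hst⟩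

end Gessel

/-- Gessel's theorem: the Poissonized Plancherel probability that a partition has first part
at most `n` equals an `n×n` Toeplitz determinant with symbol `e^{2√ξ cos θ}`. -/
theorem stmt9 (ξ : ℝ) (hξ : 0 < ξ) (n : ℕ) (hn : 1 ≤ n) :
    let T : ℤ → ℂ := fun m =>
      ((1 / (2 * Real.pi) : ℝ) : ℂ) *
        ∫ θ in (0 : ℝ)..(2 * Real.pi),
          Complex.exp (-(m : ℂ) * Complex.I * (θ : ℂ)) *
          Complex.exp (((2 * Real.sqrt ξ * Real.cos θ : ℝ) : ℂ))
    (((∑' nn : ℕ,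
        ∑ lam ∈ Finset.univ.filter (fun lam : Nat.Partition nn => nthPart lam.parts 0 ≤ n),
          ξ ^ nn * (sytCount lam.parts : ℝ) ^ 2 / ((nn.factorial : ℝ)) ^ 2 : ℝ) : ℂ)
      = Matrix.det (Matrix.of fun k l : Fin n => T ((k : ℤ) - (l : ℤ))))
    ∧ (((Real.exp (-ξ) * ∑' k : ℕ, ξ ^ k / (k.factorial : ℝ) *
          ((Set.ncard {π : Equiv.Perm (Fin k) | permLIS k π ≤ n} : ℝ) / (k.factorial : ℝ)) : ℝ) : ℂ)
        = ((Real.exp (-ξ) : ℝ) : ℂ) *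
            Matrix.det (Matrix.of fun k l : Fin n => T ((k : ℤ) - (l : ℤ)))) := by
  intro T
  have hT : ∀ j k : Fin n, HasSum (fun s : ℕ => ((Gessel.ex (Real.sqrt ξ) ((s : ℤ) - (j : ℤ)) *
      Gessel.ex (Real.sqrt ξ) ((s : ℤ) - (k : ℤ)) : ℝ) : ℂ)) (T ((j : ℤ) - (k : ℤ))) :=
    fun j k => Gessel.hasSum_toeplitz (Real.sqrt ξ) j k
  let M : Matrix (Fin n) (Fin n) ℝ := Matrix.of fun j k => (T ((j : ℤ) - (k : ℤ))).re
  have hM : ∀ j k : Fin n, HasSum (fun s : ℕ => Gessel.ex (Real.sqrt ξ) ((s : ℤ) - (j : ℤ)) *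
      Gessel.ex (Real.sqrt ξ) ((s : ℤ) - (k : ℤ))) (M j k) :=
    fun j k => by
      change HasSum _ (T ((j : ℤ) - (k : ℤ))).re
      simpa using Complex.reCLM.hasSum (hT j k)
  have hMT : ∀ j k : Fin n, ((M j k : ℝ) : ℂ) = T ((j : ℤ) - (k : ℤ)) := fun j k =>
    (Complex.hasSum_ofReal.2 (hM j k)).unique (hT j k)
  have hdet : ((M.det : ℝ) : ℂ) =
      Matrix.det (Matrix.of fun k l : Fin n => T ((k : ℤ) - (l : ℤ))) := by
    have h := Complex.ofRealHom.map_det M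
    refine Eq.trans h (congrArg Matrix.det ?_)
    ext j k
    exact hMT j k
  have hsum := Gessel.hasSum_partitions hξ.le n M hM
  refine ⟨by rw [hsum.tsum_eq, hdet], ?_⟩
  rw [← hdet, ← hsum.tsum_eq, ← Complex.ofReal_mul]
  congr 3
  funext k
  rw [Gessel.ncard_permLIS, Nat.cast_sum, Finset.sum_div, Finset.mul_sum]
  refine Finset.sum_congr rfl fun lam _ => ?_
  push_cast
  field_simp
end
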